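/- (Main theorem.) Let d ≥ 1 and 1 < q ≤ α ≤ p ≤ ∞. The map g ↦ T_g, where ⟨T_g, f⟩ = ∫_{ℝ^d} f(x) g(x) dx for f ∈ 𝓗(q,p,α), is an isometric isomorphism from the Fofana space (L^q,ℓ^p)^α(ℝ^d) onto the dual space 𝓗(q,p,α)*: it is linear, satisfies ‖T_g‖_{𝓗(q,p,α)*} = ‖g‖_{q,p,α} for every g ∈ (L^q,ℓ^p)^α(ℝ^d), and every bounded linear functional T on 𝓗(q,p,α) equals T_g for a unique g ∈ (L^q,ℓ^p)^α(ℝ^d). -/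

import Mathlib

/-!
The pairing `⟨g, f⟩ = ∫ f g` between the Fofana space and `𝓗(q,p,α)` is governed by two facts. The
adjoint of `St^{(α')}_ρ` for this pairing is the dilation `Dil`, `g ↦ ρ^{d/α} g(ρ ·)`, and the
Fofana norm of `g` is the supremum over `ρ > 0` of the unit-cube amalgam norms of `Dil_ρ g`
(`fofanaNorm_eq`).

*Upper bound.* An element of `𝓗` is dominated a.e. by the absolute series of each of its
decompositions (`IsHDecomp.enorm_le`). Moving every dilation onto `g` and applying Hölder's
inequality in amalgams term by term gives `∫ |f g| ≤ ‖f‖ ‖g‖` (`MemH.lintegral_mul_le`).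

*Lower bound.* The converse of Hölder's inequality holds in amalgams with test functions that are
bounded with bounded support (`exists_BB_test`). Such a test function `h` for `Dil_ρ g` is turned
into the element `St_ρ h` of `𝓗`, whose norm is at most the amalgam norm of `h`
(`fofanaNorm_le_of_test`).

*Surjectivity.* Let `T` be a bounded functional and `w` a positive weight lying in all the amalgams
`(L^{q'}, ℓ^{p'})` with finite exponents (`exists_weight`). Since `1 < q` and `1 < p`, both `q'`
and `p'` are finite, so dominated convergence holds in `(L^{q'}, ℓ^{p'})` and makes
`A ↦ T(χ_A w)` a complex measure, absolutely continuous with respect to Lebesgue measure. If `G` is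
its density, then `T` is integration against `g = G / w` on bounded functions with bounded support
(`HFun.exists_repr_BB`). The lower bound argument shows that `g` has finite Fofana norm, and
density of those functions in `𝓗` (`HFun.eq_zero_of_BB`) gives the representation everywhere.
Uniqueness follows by testing on indicators of compact sets.
-/

open MeasureTheory Filter Topology ENNReal

noncomputable section

/-- Dilation operator `St^{(α)}_ρ f (x) = ρ^{-d/α} f(x/ρ)` on functions on `ℝ^d`. -/
def St (d : ℕ) (α : ℝ≥0∞) (ρ : ℝ) (f : (Fin d → ℝ) → ℂ) : (Fin d → ℝ) → ℂ :=
  fun x => (ρ ^ (-(d : ℝ) * (1 / α).toReal) : ℝ) • f (ρ⁻¹ • x)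

/-- The cube `I^ρ_k = Π_j [k_j ρ, (k_j+1) ρ)`. -/
def cube (d : ℕ) (ρ : ℝ) (k : Fin d → ℤ) : Set (Fin d → ℝ) :=
  Set.univ.pi fun j => Set.Ico ((k j : ℝ) * ρ) (((k j : ℝ) + 1) * ρ)

/-- The amalgam norm `_ρ‖f‖_{q,p}`. -/
def amalgamNorm (d : ℕ) (q p : ℝ≥0∞) (ρ : ℝ) (f : (Fin d → ℝ) → ℂ) : ℝ≥0∞ :=
  if p = ∞ then ⨆ k : Fin d → ℤ, eLpNorm ((cube d ρ k).indicator f) q volume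
  else (∑' k : Fin d → ℤ,
      (eLpNorm ((cube d ρ k).indicator f) q volume) ^ p.toReal) ^ (1 / p.toReal)

/-- The Fofana norm `‖f‖_{q,p,α} = sup_{ρ>0} ρ^{d(1/α-1/q)} · _ρ‖f‖_{q,p}`. -/
def fofanaNorm (d : ℕ) (q p α : ℝ≥0∞) (f : (Fin d → ℝ) → ℂ) : ℝ≥0∞ :=
  ⨆ (ρ : ℝ) (_ : 0 < ρ),
    ENNReal.ofReal (ρ ^ ((d : ℝ) * ((1 / α).toReal - (1 / q).toReal))) *
      amalgamNorm d q p ρ f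

/-- `{(c n, ρ n, g n)}` is an 𝔥-decomposition of `f` (for the space `𝓗(q,p,α)`,
here parametrized by the conjugate exponents `q', p', α'`):
`Σ |c_n| < ∞`, each `g n` is in the unit ball of the amalgam space `(L^{q'}, ℓ^{p'})`,
and `f = Σ_n c_n St^{(α')}_{ρ_n} g_n` in the sense of `L^1_loc`. -/
structure IsHDecomp (d : ℕ) (q' p' α' : ℝ≥0∞) (f : (Fin d → ℝ) → ℂ)
    (c : ℕ → ℂ) (ρ : ℕ → ℝ) (g : ℕ → (Fin d → ℝ) → ℂ) : Prop where
  summable : Summable fun n => ‖c n‖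
  rho_pos : ∀ n, 0 < ρ n
  loc_int : ∀ n, LocallyIntegrable (g n) volume
  norm_le : ∀ n, amalgamNorm d q' p' 1 (g n) ≤ 1
  f_loc_int : LocallyIntegrable f volume
  tendsto : ∀ K : Set (Fin d → ℝ), IsCompact K →
    Tendsto (fun m => ∫ x in K, ‖(∑ n ∈ Finset.range m, c n • St d α' (ρ n) (g n)) x - f x‖)
      atTop (𝓝 0)

/-- Membership in the space `𝓗(q,p,α)` (parametrized by conjugate exponents). -/
def MemH (d : ℕ) (q' p' α' : ℝ≥0∞) (f : (Fin d → ℝ) → ℂ) : Prop :=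
  ∃ c ρ g, IsHDecomp d q' p' α' f c ρ g

/-- The norm of `𝓗(q,p,α)`:  `inf Σ|c_n|` over all 𝔥-decompositions. -/
def HNorm (d : ℕ) (q' p' α' : ℝ≥0∞) (f : (Fin d → ℝ) → ℂ) : ℝ≥0∞ :=
  sInf {s | ∃ c ρ g, IsHDecomp d q' p' α' f c ρ g ∧ s = ∑' n, ENNReal.ofReal ‖c n‖}

end

/-! ### Hölder's inequality and its converse -/

lemma toReal_conj {p q : ℝ≥0∞} (hpq : p⁻¹ + q⁻¹ = 1) (hp : 1 < p) (hpt : p ≠ ∞) :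
    p.toReal.HolderConjugate q.toReal := by
  have h1 : 1 < p.toReal := by
    rw [← ENNReal.toReal_one]
    exact (ENNReal.toReal_lt_toReal one_ne_top hpt).2 hp
  rw [Real.holderConjugate_iff]
  refine ⟨h1, ?_⟩
  rw [← ENNReal.toReal_inv, ← ENNReal.toReal_inv, ← ENNReal.toReal_add, hpq, toReal_one]
  · exact ENNReal.inv_ne_top.2 (by positivity)
  · intro h; rw [h] at hpq; simp at hpq

lemma conj_ne_top {p q : ℝ≥0∞} (hpq : p⁻¹ + q⁻¹ = 1) (hp : 1 < p) : q ≠ ∞ := by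
  rintro rfl
  simp only [ENNReal.inv_top, add_zero, ENNReal.inv_eq_one] at hpq
  exact hp.ne' hpq

lemma conj_ne_zero {p q : ℝ≥0∞} (hpq : p⁻¹ + q⁻¹ = 1) : q ≠ 0 := by
  rintro rfl
  simp at hpq

section

variable {X : Type*} [MeasurableSpace X] {μ : Measure X}

/-- Hölder's inequality for functions with values in `[0, ∞]`. -/
lemma lintegral_mul_le_eLpNorm {p q : ℝ≥0∞} (hpq : p⁻¹ + q⁻¹ = 1) (hp : 1 < p)
    {F G : X → ℝ≥0∞} (hF : AEMeasurable F μ) (hG : AEMeasurable G μ) :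
    ∫⁻ x, F x * G x ∂μ ≤ eLpNorm F q μ * eLpNorm G p μ := by
  by_cases hpt : p = ∞
  · subst hpt
    obtain rfl : q = 1 := by simpa using hpq
    rw [eLpNorm_exponent_top, eLpNorm_one_eq_lintegral_enorm,
      ← lintegral_mul_const'' _ (by simpa using hF)]
    refine lintegral_mono_ae ?_
    filter_upwards [enorm_ae_le_eLpNormEssSup G μ] with x hx
    simp only [enorm_eq_self] at hx ⊢
    gcongr
  · have hc := toReal_conj hpq hp hpt
    rw [eLpNorm_eq_lintegral_rpow_enorm_toReal (by positivity) hpt,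
      eLpNorm_eq_lintegral_rpow_enorm_toReal (conj_ne_zero hpq) (conj_ne_top hpq hp)]
    simpa using ENNReal.lintegral_mul_le_Lp_mul_Lq μ hc.symm hF hG

/-- Dominated convergence for the `L^p` seminorm of `[0, ∞]`-valued functions. -/
lemma tendsto_eLpNorm_zero {ι : Type*} {l : Filter ι} [l.IsCountablyGenerated] {p : ℝ≥0∞}
    (hp0 : p ≠ 0) (hpt : p ≠ ∞) {F : ι → X → ℝ≥0∞} {G : X → ℝ≥0∞}
    (hF : ∀ i, AEMeasurable (F i) μ) (hFG : ∀ i x, F i x ≤ G x) (hG : eLpNorm G p μ ≠ ∞)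
    (hlim : ∀ x, Tendsto (fun i => F i x) l (𝓝 0)) :
    Tendsto (fun i => eLpNorm (F i) p μ) l (𝓝 0) := by
  have hpp : 0 < p.toReal := ENNReal.toReal_pos hp0 hpt
  simp only [eLpNorm_eq_lintegral_rpow_enorm_toReal hp0 hpt, enorm_eq_self] at hG ⊢
  have hG' : ∫⁻ x, G x ^ p.toReal ∂μ ≠ ∞ := by
    intro h
    rw [h] at hG
    exact hG (ENNReal.top_rpow_of_pos (by positivity))
  have key : Tendsto (fun i => ∫⁻ x, F i x ^ p.toReal ∂μ) l (𝓝 (∫⁻ x, 0 ∂μ)) := by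
    have hmeas : ∀ i, AEMeasurable (fun x => F i x ^ p.toReal) μ := fun i => (hF i).pow_const _
    refine tendsto_lintegral_filter_of_dominated_convergence' (fun x => G x ^ p.toReal)
      (Eventually.of_forall hmeas) (Eventually.of_forall fun i => Eventually.of_forall fun x =>
        ENNReal.rpow_le_rpow (hFG i x) hpp.le) hG' (Eventually.of_forall fun x => ?_)
    have := (ENNReal.continuous_rpow_const (y := p.toReal)).tendsto 0 |>.comp (hlim x)
    simpa [ENNReal.zero_rpow_of_pos hpp, Function.comp_def] using this
  have := (ENNReal.continuous_rpow_const (y := 1 / p.toReal)).tendsto _ |>.comp key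
  simpa [ENNReal.zero_rpow_of_pos (inv_pos.2 hpp), Function.comp_def] using this

/-- Converse of Hölder's inequality, with a test function that is bounded and supported on a set of
finite measure. For `p = ∞` it is the normalized indicator of a piece of `{b < G}`; for `p < ∞` it
is the extremal function of a bounded truncation of `G`. -/
lemma exists_dual_test [SigmaFinite μ] {p q : ℝ≥0∞} (hpq : p⁻¹ + q⁻¹ = 1) (hp : 1 < p)
    {G : X → ℝ≥0∞} (hG : Measurable G) {a : ℝ≥0∞} (ha : a < eLpNorm G p μ) :
    ∃ (H : X → NNReal) (M : NNReal) (S : Set X), Measurable H ∧ μ S < ∞ ∧ (∀ x, H x ≤ M) ∧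
      (∀ x, x ∉ S → H x = 0) ∧ eLpNorm (fun x => (H x : ℝ≥0∞)) q μ ≤ 1 ∧
      a < ∫⁻ x, H x * G x ∂μ := by
  by_cases hpt : p = ∞
  · subst hpt
    obtain rfl : q = 1 := by simpa using hpq
    obtain ⟨b, hab, hb⟩ := exists_between ha
    have hA : 0 < μ {x | b < G x} := by
      rw [pos_iff_ne_zero]
      intro h0
      refine hb.not_ge ?_
      rw [eLpNorm_exponent_top]
      refine essSup_le_of_ae_le _ ?_
      rw [Filter.EventuallyLE, ae_iff]
      simpa using h0
    obtain ⟨A, hAm, hAs, hA0, hAt⟩ : ∃ A, MeasurableSet A ∧ A ⊆ {x | b < G x} ∧ 0 < μ A ∧ μ A < ∞ := by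
      obtain ⟨A, h1, h2, h3, h4⟩ := Measure.exists_subset_measure_lt_top
        (measurableSet_lt measurable_const hG) hA
      exact ⟨A, h1, h2, h3, h4⟩
    refine ⟨A.indicator fun _ => (μ A)⁻¹.toNNReal, (μ A)⁻¹.toNNReal, A,
      measurable_const.indicator hAm, hAt, fun x => ?_, fun x hx => by simp [hx], ?_, ?_⟩
    · by_cases hx : x ∈ A <;> simp [hx]
    · rw [eLpNorm_one_eq_lintegral_enorm]
      have : ∀ x, ‖((A.indicator (fun _ => (μ A)⁻¹.toNNReal) x : NNReal) : ℝ≥0∞)‖ₑ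
          = A.indicator (fun _ => (μ A)⁻¹) x := by
        intro x
        by_cases hx : x ∈ A
        · simp only [hx, Set.indicator_of_mem, enorm_eq_self]
          exact ENNReal.coe_toNNReal (ENNReal.inv_ne_top.2 hA0.ne')
        · simp [hx]
      simp_rw [this]
      rw [lintegral_indicator_const hAm, ENNReal.inv_mul_cancel hA0.ne' hAt.ne]
    · refine hab.trans_le ?_
      calc b = ∫⁻ x, A.indicator (fun _ => (μ A)⁻¹ * b) x ∂μ := by
            rw [lintegral_indicator_const hAm, mul_right_comm, ENNReal.inv_mul_cancel hA0.ne' hAt.ne,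
              one_mul]
        _ ≤ _ := by
            refine lintegral_mono fun x => ?_
            by_cases hx : x ∈ A
            · simp only [hx, Set.indicator_of_mem]
              rw [ENNReal.coe_toNNReal (ENNReal.inv_ne_top.2 hA0.ne')]
              gcongr
              exact (hAs hx).le
            · simp [hx]
  · have hc := toReal_conj hpq hp hpt
    set r := p.toReal with hr
    have hr1 : 1 < r := hc.lt
    have hr0 : 0 < r := hc.pos
    let Gn : ℕ → X → ℝ≥0∞ := fun n => (spanningSets μ n).indicator fun x => min (G x) n
    have hGm : ∀ n, Measurable (Gn n) := fun n =>
      (hG.min measurable_const).indicator (measurableSet_spanningSets μ n)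
    have hGle : ∀ n x, Gn n x ≤ G x := fun n x => by
      by_cases hx : x ∈ spanningSets μ n <;> simp [Gn, hx]
    have hGn : ∀ n x, Gn n x ≤ n := fun n x => by
      by_cases hx : x ∈ spanningSets μ n <;> simp [Gn, hx]
    have hmono : ∀ x, Monotone fun n => Gn n x := by
      intro x n m hnm
      by_cases hx : x ∈ spanningSets μ n
      · have hx' := monotone_spanningSets μ hnm hx
        simp only [Gn, hx, hx', Set.indicator_of_mem]
        gcongr
      · simp [Gn, hx]
    have hlim : ∀ x, Tendsto (fun n => Gn n x) atTop (𝓝 (G x)) := by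
      intro x
      have h1 : Tendsto (fun n : ℕ => min (G x) n) atTop (𝓝 (min (G x) ∞)) :=
        tendsto_const_nhds.min ENNReal.tendsto_nat_nhds_top
      rw [min_top_right] at h1
      refine h1.congr' ?_
      filter_upwards [eventually_ge_atTop (spanningSetsIndex μ x)] with n hn
      have : x ∈ spanningSets μ n := monotone_spanningSets μ hn (mem_spanningSetsIndex μ x)
      simp [Gn, this]
    have hint : Tendsto (fun n => ∫⁻ x, Gn n x ^ r ∂μ) atTop (𝓝 (∫⁻ x, G x ^ r ∂μ)) := by
      refine lintegral_tendsto_of_tendsto_of_monotone (fun n => ((hGm n).pow_const _).aemeasurable)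
        (Eventually.of_forall fun x n m hnm => ENNReal.rpow_le_rpow (hmono x hnm) hr0.le)
        (Eventually.of_forall fun x => ?_)
      exact (ENNReal.continuous_rpow_const.tendsto _).comp (hlim x)
    have hint' := (ENNReal.continuous_rpow_const (y := 1 / r)).tendsto _ |>.comp hint
    rw [eLpNorm_eq_lintegral_rpow_enorm_toReal (by positivity) hpt] at ha
    simp only [enorm_eq_self] at ha
    obtain ⟨n, hn⟩ := (hint'.eventually (lt_mem_nhds ha)).exists
    simp only [Function.comp] at hn
    set I := ∫⁻ x, Gn n x ^ r ∂μ with hI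
    have hIt : I ≠ ∞ := by
      refine ne_of_lt ?_
      calc I ≤ ∫⁻ x, (spanningSets μ n).indicator (fun _ => (n : ℝ≥0∞) ^ r) x ∂μ := by
            refine lintegral_mono fun x => ?_
            by_cases hx : x ∈ spanningSets μ n
            · simp only [hx, Set.indicator_of_mem]
              exact ENNReal.rpow_le_rpow (hGn n x) hr0.le
            · simp [Gn, hx, hr0]
        _ < ∞ := by
            rw [lintegral_indicator_const (measurableSet_spanningSets μ n)]
            exact ENNReal.mul_lt_top (ENNReal.rpow_lt_top_of_nonneg hr0.le (by simp))
              (measure_spanningSets_lt_top μ n)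
    have hI0 : I ≠ 0 := by
      intro h0
      rw [h0, ENNReal.zero_rpow_of_pos (by positivity)] at hn
      exact not_lt_bot hn
    -- The extremal function is `Gₙ^(r-1) / ‖Gₙ‖_r^(r-1)`, with `‖Gₙ‖_r^(r-1) = I^(1/s)`.
    set s := q.toReal with hs
    have hs0 : 0 < s := hc.symm.pos
    set N := I ^ (1 / s) with hN
    have hN0 : N ≠ 0 := by simp [hN, hI0, hIt]
    have hNt : N ≠ ∞ := ENNReal.rpow_ne_top_of_nonneg (by positivity) hIt
    have hHle : ∀ x, Gn n x ^ (r - 1) / N ≤ (n : ℝ≥0∞) ^ (r - 1) / N := fun x => by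
      have : (0 : ℝ) ≤ r - 1 := by linarith
      gcongr
      exact hGn n x
    have hnt : (n : ℝ≥0∞) ^ (r - 1) / N ≠ ∞ :=
      ENNReal.div_ne_top (ENNReal.rpow_ne_top_of_nonneg (by linarith) (by simp)) hN0
    have hHt : ∀ x, Gn n x ^ (r - 1) / N ≠ ∞ := fun x => ne_top_of_le_ne_top hnt (hHle x)
    refine ⟨fun x => (Gn n x ^ (r - 1) / N).toNNReal, ((n : ℝ≥0∞) ^ (r - 1) / N).toNNReal,
      spanningSets μ n, ?_, measure_spanningSets_lt_top μ n, fun x => ?_, fun x hx => ?_, ?_, ?_⟩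
    · exact (((hGm n).pow_const _).div_const _).ennreal_toNNReal
    · exact ENNReal.toNNReal_mono hnt (hHle x)
    · have : (0 : ℝ) < r - 1 := by linarith
      simp [Gn, hx, this]
    · simp only [ENNReal.coe_toNNReal (hHt _)]
      rw [eLpNorm_eq_lintegral_rpow_enorm_toReal (conj_ne_zero hpq) (conj_ne_top hpq hp)]
      have hNs : N ^ s = I := by
        rw [hN, ← ENNReal.rpow_mul, one_div_mul_cancel hs0.ne', ENNReal.rpow_one]
      have hpow : ∀ x, ‖Gn n x ^ (r - 1) / N‖ₑ ^ s = Gn n x ^ r * I⁻¹ := fun x => by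
        rw [enorm_eq_self, ENNReal.div_rpow_of_nonneg _ _ hs0.le, ← ENNReal.rpow_mul,
          hc.sub_one_mul_conj, hNs, div_eq_mul_inv]
      simp_rw [← hs, hpow]
      rw [lintegral_mul_const' _ _ (by simp [hI0]), ← hI, ENNReal.mul_inv_cancel hI0 hIt,
        ENNReal.one_rpow]
    · refine hn.trans_le ?_
      simp only [ENNReal.coe_toNNReal (hHt _)]
      calc I ^ (1 / r) = I / N := by
            have h1 : 1 / r = 1 - 1 / s := by
              have := hc.inv_add_inv_eq_one
              simp only [one_div]
              linarith
            rw [hN, h1, ENNReal.rpow_sub _ _ hI0 hIt, ENNReal.rpow_one]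
        _ = ∫⁻ x, Gn n x ^ (r - 1) / N * Gn n x ∂μ := by
            simp only [div_eq_mul_inv, mul_right_comm _ N⁻¹]
            rw [lintegral_mul_const' _ _ (by simp [hN0]), hI]
            congr 2
            ext x
            have h1 := ENNReal.rpow_add_of_nonneg (x := Gn n x) (r - 1) 1 (by linarith) zero_le_one
            rwa [sub_add_cancel, ENNReal.rpow_one] at h1
        _ ≤ _ := lintegral_mono fun x => by gcongr; exact hGle n x

end

/-! ### Amalgam norms -/

/-- The index `k` of the unit cube `I_k` containing `x`. -/
noncomputable def cubeIndex (d : ℕ) (x : Fin d → ℝ) : Fin d → ℤ := fun j => ⌊x j⌋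

/-- The amalgam norm over unit cubes, as the `ℓ^p` norm (an `L^p` norm for the counting measure)
of the family of local `L^q` norms. -/
noncomputable def Am (d : ℕ) (q p : ℝ≥0∞) (f : (Fin d → ℝ) → ℂ) : ℝ≥0∞ :=
  eLpNorm (fun k : Fin d → ℤ => eLpNorm f q (volume.restrict (cube d 1 k))) p Measure.count

section

variable {d : ℕ} {q p : ℝ≥0∞}

lemma mem_cube_one {k : Fin d → ℤ} {x : Fin d → ℝ} : x ∈ cube d 1 k ↔ cubeIndex d x = k := by
  simp [cube, cubeIndex, funext_iff, Int.floor_eq_iff]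

lemma measurableSet_cube (ρ : ℝ) (k : Fin d → ℤ) : MeasurableSet (cube d ρ k) :=
  MeasurableSet.univ_pi fun _ => measurableSet_Ico

lemma volume_cube_one (k : Fin d → ℤ) : volume (cube d 1 k) = 1 := by
  simp [cube, Real.volume_pi_Ico]

instance (k : Fin d → ℤ) : IsProbabilityMeasure (volume.restrict (cube d 1 k)) :=
  ⟨by simp [volume_cube_one]⟩

lemma measurable_cubeIndex : Measurable (cubeIndex d) :=
  measurable_pi_lambda _ fun j => Int.measurable_floor.comp (measurable_pi_apply j)

lemma lintegral_eq_count_cubes (f : (Fin d → ℝ) → ℝ≥0∞) :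
    ∫⁻ x, f x = ∫⁻ k, (∫⁻ x in cube d 1 k, f x) ∂Measure.count := by
  rw [lintegral_count, ← lintegral_iUnion (fun k => measurableSet_cube 1 k), ← setLIntegral_univ]
  · congr 2
    ext x
    simp [mem_cube_one]
  · intro k l hkl
    refine Set.disjoint_left.2 fun x hx hx' => hkl ?_
    rw [← mem_cube_one.1 hx, ← mem_cube_one.1 hx']

/-- The amalgam norm is an `L^p` norm for the counting measure on the cubes, which treats `p = ∞`
and `p < ∞` uniformly. -/
lemma amalgamNorm_eq (hp : p ≠ 0) (ρ : ℝ) (f : (Fin d → ℝ) → ℂ) :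
    amalgamNorm d q p ρ f =
      eLpNorm (fun k : Fin d → ℤ => eLpNorm ((cube d ρ k).indicator f) q volume) p
        Measure.count := by
  unfold amalgamNorm
  split_ifs with h
  · subst h
    rw [eLpNorm_exponent_top, eLpNormEssSup, essSup_count]
    simp
  · rw [eLpNorm_eq_lintegral_rpow_enorm_toReal hp h, lintegral_count]
    simp

lemma amalgamNorm_one (hp : p ≠ 0) (f : (Fin d → ℝ) → ℂ) :
    amalgamNorm d q p 1 f = Am d q p f := by
  rw [amalgamNorm_eq hp, Am]
  simp only [eLpNorm_indicator_eq_eLpNorm_restrict (measurableSet_cube _ _)]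

lemma Am_mono_ae {f g : (Fin d → ℝ) → ℂ} (h : ∀ᵐ x, ‖f x‖ₑ ≤ ‖g x‖ₑ) :
    Am d q p f ≤ Am d q p g := by
  refine eLpNorm_mono_enorm fun k => ?_
  simp only [enorm_eq_self]
  exact eLpNorm_mono_enorm_ae (ae_restrict_of_ae h)

lemma Am_congr_ae {f g : (Fin d → ℝ) → ℂ} (h : f =ᵐ[volume] g) : Am d q p f = Am d q p g :=
  le_antisymm (Am_mono_ae (h.mono fun x hx => by rw [hx]))
    (Am_mono_ae (h.mono fun x hx => by rw [hx]))

lemma eLpNorm_const_mul_ennreal {X : Type*} [MeasurableSpace X] {μ : Measure X} {c : ℝ≥0∞}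
    (hc : c ≠ ∞) (F : X → ℝ≥0∞) :
    eLpNorm (fun x => c * F x) p μ = c * eLpNorm F p μ := by
  by_cases hp0 : p = 0
  · simp [hp0]
  by_cases hpt : p = ∞
  · subst hpt
    simp only [eLpNorm_exponent_top, eLpNormEssSup, enorm_eq_self]
    exact ENNReal.essSup_const_mul
  · have hpp := ENNReal.toReal_pos hp0 hpt
    simp only [eLpNorm_eq_lintegral_rpow_enorm_toReal hp0 hpt, enorm_eq_self,
      ENNReal.mul_rpow_of_nonneg _ _ hpp.le]
    rw [lintegral_const_mul' _ _ (ENNReal.rpow_ne_top_of_nonneg hpp.le hc),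
      ENNReal.mul_rpow_of_nonneg _ _ (by positivity), ← ENNReal.rpow_mul,
      mul_one_div_cancel hpp.ne', ENNReal.rpow_one]

lemma Am_smul (c : ℂ) (f : (Fin d → ℝ) → ℂ) : Am d q p (c • f) = ‖c‖ₑ * Am d q p f := by
  unfold Am
  simp only [eLpNorm_const_smul]
  exact eLpNorm_const_mul_ennreal enorm_ne_top _

/-- Hölder's inequality for amalgams. -/
lemma lintegral_mul_le_Am {q' p' : ℝ≥0∞} (hq : q⁻¹ + q'⁻¹ = 1) (hq1 : 1 < q)
    (hp : p⁻¹ + p'⁻¹ = 1) (hp1 : 1 < p) {f g : (Fin d → ℝ) → ℂ}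
    (hf : AEStronglyMeasurable f volume) (hg : AEStronglyMeasurable g volume) :
    ∫⁻ x, ‖f x‖ₑ * ‖g x‖ₑ ≤ Am d q' p' f * Am d q p g := by
  rw [lintegral_eq_count_cubes]
  refine le_trans (lintegral_mono fun k => ?_) (lintegral_mul_le_eLpNorm hp hp1
    (Measurable.of_discrete).aemeasurable (Measurable.of_discrete).aemeasurable)
  have := lintegral_mul_le_eLpNorm (μ := volume.restrict (cube d 1 k)) hq hq1
    hf.enorm.restrict hg.enorm.restrict
  simpa only [eLpNorm_enorm] using this

/-- Dominated convergence for amalgams. -/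
lemma tendsto_Am_zero {ι : Type*} {l : Filter ι} [l.IsCountablyGenerated]
    (hq0 : q ≠ 0) (hqt : q ≠ ∞) (hp0 : p ≠ 0) (hpt : p ≠ ∞)
    {F : ι → (Fin d → ℝ) → ℂ} {G : (Fin d → ℝ) → ℂ}
    (hF : ∀ i, AEStronglyMeasurable (F i) volume) (hFG : ∀ i x, ‖F i x‖ₑ ≤ ‖G x‖ₑ)
    (hG : Am d q p G ≠ ∞) (hlim : ∀ x, Tendsto (fun i => F i x) l (𝓝 0)) :
    Tendsto (fun i => Am d q p (F i)) l (𝓝 0) := by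
  refine tendsto_eLpNorm_zero (G := fun k => eLpNorm G q (volume.restrict (cube d 1 k))) hp0 hpt
    (fun i => (Measurable.of_discrete).aemeasurable)
    (fun i k => eLpNorm_mono_enorm (hFG i)) hG (fun k => ?_)
  have hGk : eLpNorm G q (volume.restrict (cube d 1 k)) ≠ ∞ := by
    intro h
    apply hG
    unfold Am
    rw [eLpNorm_eq_lintegral_rpow_enorm_toReal hp0 hpt, lintegral_count]
    have hpp := ENNReal.toReal_pos hp0 hpt
    have : (∑' k, ‖eLpNorm G q (volume.restrict (cube d 1 k))‖ₑ ^ p.toReal) = ∞ :=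
      ENNReal.tsum_eq_top_of_eq_top ⟨k, by simp [h, hpp]⟩
    rw [this, ENNReal.top_rpow_of_pos (by positivity)]
  have := tendsto_eLpNorm_zero (l := l) (μ := volume.restrict (cube d 1 k)) hq0 hqt
    (F := fun i x => ‖F i x‖ₑ) (G := fun x => ‖G x‖ₑ) (fun i => (hF i).enorm.restrict) hFG
    (by simpa only [eLpNorm_enorm] using hGk)
    (fun x => by simpa [Function.comp_def] using (continuous_enorm.tendsto _).comp (hlim x))
  simpa only [eLpNorm_enorm] using this

/-! ### Dilations -/

/-- The dilation adjoint to `St^{(α')}_ρ`, namely `g ↦ ρ^{d/α} g(ρ ·)`; it reduces cubes of side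
`ρ` to unit cubes. -/
noncomputable def Dil (d : ℕ) (α : ℝ≥0∞) (ρ : ℝ) (g : (Fin d → ℝ) → ℂ) : (Fin d → ℝ) → ℂ :=
  fun x => (ρ ^ ((d : ℝ) * (1 / α).toReal) : ℝ) • g (ρ • x)

lemma measurableEmbedding_dil {ρ : ℝ} (hρ : 0 < ρ) :
    MeasurableEmbedding (fun x : Fin d → ℝ => ρ • x) :=
  (Homeomorph.smulOfNeZero ρ hρ.ne').measurableEmbedding

lemma mem_cube_smul {ρ : ℝ} (hρ : 0 < ρ) {k : Fin d → ℤ} {x : Fin d → ℝ} :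
    ρ • x ∈ cube d ρ k ↔ x ∈ cube d 1 k := by
  simp only [cube, Set.mem_univ_pi, Set.mem_Ico, Pi.smul_apply, smul_eq_mul, mul_one]
  refine forall_congr' fun j => ?_
  rw [mul_comm ρ, mul_le_mul_iff_left₀ hρ, mul_lt_mul_iff_left₀ hρ]

lemma eLpNorm_comp_smul {ρ : ℝ} (hρ : 0 < ρ) (f : (Fin d → ℝ) → ℂ) :
    eLpNorm (fun x => f (ρ • x)) q volume =
      ENNReal.ofReal (ρ ^ (-(d : ℝ) * (1 / q).toReal)) * eLpNorm f q volume := by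
  have h := (measurableEmbedding_dil (d := d) hρ).eLpNorm_map_measure (g := f) (p := q)
    (μ := volume)
  rw [Measure.map_addHaar_smul _ hρ.ne', eLpNorm_smul_measure_of_ne_zero] at h
  · rw [Function.comp_def] at h
    rw [← h, smul_eq_mul]
    congr 1
    rw [abs_of_pos (by positivity), ENNReal.ofReal_rpow_of_pos (by positivity)]
    congr 1
    rw [Module.finrank_fin_fun, Real.rpow_mul hρ.le, Real.rpow_neg hρ.le, Real.rpow_natCast]
  · simp only [ne_eq, ENNReal.ofReal_eq_zero, not_le]
    positivity

/-- The power of `ρ` in the Fofana norm is exactly what turns the cubes of side `ρ` into unit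
cubes after dilation. -/
lemma Am_Dil (hp0 : p ≠ 0) (α : ℝ≥0∞) {ρ : ℝ} (hρ : 0 < ρ)
    (g : (Fin d → ℝ) → ℂ) :
    ENNReal.ofReal (ρ ^ ((d : ℝ) * ((1 / α).toReal - (1 / q).toReal))) *
      amalgamNorm d q p ρ g = Am d q p (Dil d α ρ g) := by
  rw [amalgamNorm_eq hp0, Am, ← eLpNorm_const_mul_ennreal ENNReal.ofReal_ne_top]
  congr 1
  ext k
  rw [← eLpNorm_indicator_eq_eLpNorm_restrict (measurableSet_cube _ _)]
  have h1 : (cube d 1 k).indicator (Dil d α ρ g) =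
      (ρ ^ ((d : ℝ) * (1 / α).toReal) : ℝ) • fun x => (cube d ρ k).indicator g (ρ • x) := by
    ext x
    by_cases hx : x ∈ cube d 1 k
    · simp [hx, (mem_cube_smul hρ).2 hx, Dil]
    · simp [hx, mt (mem_cube_smul hρ).1 hx]
  rw [h1, eLpNorm_const_smul, eLpNorm_comp_smul hρ, ← mul_assoc,
    Real.enorm_of_nonneg (by positivity), ← ENNReal.ofReal_mul (by positivity),
    ← Real.rpow_add hρ]
  congr 4
  ring

lemma fofanaNorm_eq (hp0 : p ≠ 0) (α : ℝ≥0∞) (g : (Fin d → ℝ) → ℂ) :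
    fofanaNorm d q p α g = ⨆ (ρ : ℝ) (_ : 0 < ρ), Am d q p (Dil d α ρ g) := by
  unfold fofanaNorm
  refine iSup_congr fun ρ => iSup_congr fun hρ => Am_Dil hp0 α hρ g

lemma Am_Dil_le (hp0 : p ≠ 0) (α : ℝ≥0∞) (g : (Fin d → ℝ) → ℂ) {ρ : ℝ}
    (hρ : 0 < ρ) : Am d q p (Dil d α ρ g) ≤ fofanaNorm d q p α g := by
  rw [fofanaNorm_eq hp0]
  exact le_iSup₂ (f := fun ρ (_ : 0 < ρ) => Am d q p (Dil d α ρ g)) ρ hρ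

lemma St_smul_mul {α α' : ℝ≥0∞} (hα : (1 / α).toReal + (1 / α').toReal = 1) {ρ : ℝ} (hρ : 0 < ρ)
    (f g : (Fin d → ℝ) → ℂ) (y : Fin d → ℝ) :
    (ρ ^ d : ℝ) • (St d α' ρ f (ρ • y) * g (ρ • y)) = f y * Dil d α ρ g y := by
  simp only [St, Dil, inv_smul_smul₀ hρ.ne', smul_mul_assoc, mul_smul_comm, smul_smul]
  congr 1
  rw [← Real.rpow_natCast, ← Real.rpow_add hρ]
  congr 1
  rw [← eq_sub_iff_add_eq] at hα
  rw [hα]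
  ring

/-- `Dil` with exponent `α` is adjoint to `St` with the conjugate exponent. -/
lemma integral_St_mul {α α' : ℝ≥0∞} (hα : (1 / α).toReal + (1 / α').toReal = 1) {ρ : ℝ}
    (hρ : 0 < ρ) (f g : (Fin d → ℝ) → ℂ) :
    ∫ x, St d α' ρ f x * g x = ∫ x, f x * Dil d α ρ g x := by
  simp only [← St_smul_mul hα hρ]
  rw [integral_smul, Measure.integral_comp_smul volume (fun x => St d α' ρ f x * g x),
    Module.finrank_fin_fun, smul_smul, abs_of_pos (by positivity), mul_inv_cancel₀ (by positivity),
    one_smul]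

lemma lintegral_St_mul {α α' : ℝ≥0∞} (hα : (1 / α).toReal + (1 / α').toReal = 1) {ρ : ℝ}
    (hρ : 0 < ρ) (f g : (Fin d → ℝ) → ℂ) :
    ∫⁻ x, ‖St d α' ρ f x‖ₑ * ‖g x‖ₑ = ∫⁻ x, ‖f x‖ₑ * ‖Dil d α ρ g x‖ₑ := by
  simp only [← enorm_mul, ← eLpNorm_one_eq_lintegral_enorm]
  simp only [← St_smul_mul hα hρ]
  have h := eLpNorm_const_smul (μ := volume) (p := 1) (ρ ^ d : ℝ)
    (fun y => St d α' ρ f (ρ • y) * g (ρ • y))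
  have h' := eLpNorm_comp_smul (q := 1) hρ (fun x => St d α' ρ f x * g x)
  rw [h'] at h
  refine Eq.trans ?_ h.symm
  rw [← mul_assoc, Real.enorm_of_nonneg (by positivity), ← ENNReal.ofReal_mul (by positivity),
    ← Real.rpow_natCast, ← Real.rpow_add hρ]
  simp

lemma aestronglyMeasurable_comp_smul {f : (Fin d → ℝ) → ℂ} (hf : AEStronglyMeasurable f volume)
    {ρ : ℝ} (hρ : 0 < ρ) : AEStronglyMeasurable (fun x => f (ρ • x)) volume := by
  refine hf.comp_quasiMeasurePreserving (f := fun x => ρ • x) ⟨measurable_const_smul ρ, ?_⟩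
  rw [Measure.map_addHaar_smul _ hρ.ne']
  exact Measure.smul_absolutelyContinuous

lemma aestronglyMeasurable_Dil {α : ℝ≥0∞} {f : (Fin d → ℝ) → ℂ}
    (hf : AEStronglyMeasurable f volume) {ρ : ℝ} (hρ : 0 < ρ) :
    AEStronglyMeasurable (Dil d α ρ f) volume :=
  (aestronglyMeasurable_comp_smul hf hρ).const_smul (ρ ^ ((d : ℝ) * (1 / α).toReal) : ℝ)

lemma locallyIntegrable_comp_smul {f : (Fin d → ℝ) → ℂ} (hf : LocallyIntegrable f volume)
    {ρ : ℝ} (hρ : 0 < ρ) : LocallyIntegrable (fun x => f (ρ • x)) volume := by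
  rw [locallyIntegrable_iff] at hf ⊢
  intro K hK
  have h1 := hf _ (hK.image (continuous_const_smul ρ))
  rw [← integrable_indicator_iff (hK.image (continuous_const_smul ρ)).measurableSet,
    ← integrable_comp_smul_iff _ _ hρ.ne'] at h1
  rw [← integrable_indicator_iff hK.measurableSet]
  refine h1.congr (Eventually.of_forall fun x => ?_)
  by_cases hx : x ∈ K
  · have : ρ • x ∈ (fun x => ρ • x) '' K := ⟨x, hx, rfl⟩
    simp only [Set.indicator_of_mem hx, Set.indicator_of_mem this]
  · have : ρ • x ∉ (fun x => ρ • x) '' K := by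
      rintro ⟨y, hy, hxy⟩
      exact hx (smul_right_injective _ hρ.ne' hxy ▸ hy)
    simp only [Set.indicator_of_notMem hx, Set.indicator_of_notMem this]

lemma locallyIntegrable_St {α : ℝ≥0∞} {f : (Fin d → ℝ) → ℂ} (hf : LocallyIntegrable f volume)
    {ρ : ℝ} (hρ : 0 < ρ) : LocallyIntegrable (St d α ρ f) volume :=
  (locallyIntegrable_comp_smul hf (inv_pos.2 hρ)).smul (ρ ^ (-(d : ℝ) * (1 / α).toReal) : ℝ)

lemma locallyIntegrable_Dil {α : ℝ≥0∞} {f : (Fin d → ℝ) → ℂ} (hf : LocallyIntegrable f volume)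
    {ρ : ℝ} (hρ : 0 < ρ) : LocallyIntegrable (Dil d α ρ f) volume :=
  (locallyIntegrable_comp_smul hf hρ).smul (ρ ^ ((d : ℝ) * (1 / α).toReal) : ℝ)

end

/-! ### A weight and bounded test functions -/

section

variable {d : ℕ} {q p : ℝ≥0∞}

lemma finite_cubeIndex (R : ℝ) : {k | ∃ x : Fin d → ℝ, ‖x‖ ≤ R ∧ cubeIndex d x = k}.Finite := by
  refine (Set.finite_Icc (fun _ : Fin d => ⌊-R⌋) (fun _ => ⌊R⌋)).subset ?_
  rintro k ⟨x, hx, rfl⟩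
  have h : ∀ j, |x j| ≤ R := fun j => (norm_le_pi_norm x j).trans hx
  exact ⟨fun j => Int.floor_le_floor (abs_le.1 (h j)).1,
    fun j => Int.floor_le_floor (abs_le.1 (h j)).2⟩

/-- A positive bounded weight lying in every amalgam `(L^q, ℓ^p)` with `q ≠ 0` and `1 ≤ p < ∞`, and
bounded below on bounded sets: it is constant on unit cubes, with a summable family of values. -/
lemma exists_weight (d : ℕ) : ∃ w : (Fin d → ℝ) → ℝ, Measurable w ∧ (∀ x, 0 < w x) ∧
    (∀ x, w x ≤ 1) ∧
    (∀ R : ℝ, ∃ δ > 0, ∀ x, ‖x‖ ≤ R → δ ≤ w x) ∧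
    ∀ q p : ℝ≥0∞, q ≠ 0 → 1 ≤ p → p ≠ ∞ → Am d q p (fun x => (w x : ℂ)) ≠ ∞ := by
  obtain ⟨c, hc0, hc⟩ := ENNReal.exists_pos_sum_of_countable one_ne_zero (Fin d → ℤ)
  refine ⟨fun x => c (cubeIndex d x), ?_, fun x => NNReal.coe_pos.2 (hc0 _),
    fun x => ?_, fun R => ?_, ?_⟩
  · exact (Measurable.of_discrete (f := c)).coe_nnreal_real.comp measurable_cubeIndex
  · have hk : (c (cubeIndex d x) : ℝ≥0∞) ≤ 1 :=
      (ENNReal.le_tsum (f := fun k => (c k : ℝ≥0∞)) _).trans hc.le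
    exact_mod_cast hk
  · by_cases hne : {k | ∃ x : Fin d → ℝ, ‖x‖ ≤ R ∧ cubeIndex d x = k}.Nonempty
    · obtain ⟨k, -, hk⟩ := Set.exists_min_image _ c (finite_cubeIndex (d := d) R) hne
      exact ⟨c k, NNReal.coe_pos.2 (hc0 k), fun x hx => NNReal.coe_le_coe.2 (hk _ ⟨x, hx, rfl⟩)⟩
    · exact ⟨1, one_pos, fun x hx => (hne ⟨_, x, hx, rfl⟩).elim⟩
  · intro q p hq hp hpt
    have hp0 : p ≠ 0 := (zero_lt_one.trans_le hp).ne'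
    have hp1 : 1 ≤ p.toReal := by
      rw [← ENNReal.toReal_one]
      exact ENNReal.toReal_mono hpt hp
    have hloc : ∀ k, eLpNorm (fun x => ((c (cubeIndex d x) : ℝ) : ℂ)) q
        (volume.restrict (cube d 1 k)) = c k := fun k => by
      have : (fun x => ((c (cubeIndex d x) : ℝ) : ℂ)) =ᵐ[volume.restrict (cube d 1 k)]
          fun _ => ((c k : ℝ) : ℂ) := by
        filter_upwards [ae_restrict_mem (measurableSet_cube 1 k)] with x hx
        rw [mem_cube_one.1 hx]
      rw [eLpNorm_congr_ae this, eLpNorm_const _ hq (IsProbabilityMeasure.ne_zero _)]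
      simp [enorm_eq_nnnorm]
    unfold Am
    simp_rw [hloc]
    rw [eLpNorm_eq_lintegral_rpow_enorm_toReal hp0 hpt, lintegral_count]
    refine ENNReal.rpow_ne_top_of_nonneg (by positivity) (ne_top_of_le_ne_top one_ne_top ?_)
    refine le_trans (ENNReal.tsum_le_tsum fun k => ?_) hc.le
    have hk : (c k : ℝ≥0∞) ≤ 1 := (ENNReal.le_tsum k).trans hc.le
    simpa using ENNReal.rpow_le_rpow_of_exponent_ge hk hp1

/-- Bounded functions with bounded support, the test functions of the duality argument. A single
constant bounds both the values and the support. -/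
structure BB {d : ℕ} (h : (Fin d → ℝ) → ℂ) : Prop where
  meas : AEStronglyMeasurable h volume
  bdd : ∃ M : ℝ, (∀ x, ‖h x‖ ≤ M) ∧ ∀ x, M < ‖x‖ → h x = 0

lemma BB.locallyIntegrable {h : (Fin d → ℝ) → ℂ} (hh : BB h) : LocallyIntegrable h volume := by
  obtain ⟨M, hM, -⟩ := hh.bdd
  rw [locallyIntegrable_iff]
  intro K hK
  exact Measure.integrableOn_of_bounded hK.measure_lt_top.ne hh.meas (Eventually.of_forall hM)

lemma BB.integrable_mul {h g : (Fin d → ℝ) → ℂ} (hh : BB h) (hg : LocallyIntegrable g volume) :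
    Integrable (fun x => h x * g x) volume := by
  obtain ⟨M, hM, hM'⟩ := hh.bdd
  have h1 : IntegrableOn (fun x => h x * g x) (Metric.closedBall 0 M) volume :=
    (hg.integrableOn_isCompact (isCompact_closedBall 0 M)).bdd_mul hh.meas.restrict
      (Eventually.of_forall hM)
  rw [← integrable_indicator_iff measurableSet_closedBall] at h1
  refine h1.congr (Eventually.of_forall fun x => ?_)
  by_cases hx : x ∈ Metric.closedBall (0 : Fin d → ℝ) M
  · simp [hx]
  · have : h x = 0 := hM' x (by simpa using hx)
    simp [hx, this]

lemma BB.Am_ne_top {h : (Fin d → ℝ) → ℂ} (hh : BB h) (hq : q ≠ 0) (hp : 1 ≤ p) (hpt : p ≠ ∞) :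
    Am d q p h ≠ ∞ := by
  obtain ⟨w, -, hw0, -, hwR, hwA⟩ := exists_weight d
  obtain ⟨M, hM, hM'⟩ := hh.bdd
  obtain ⟨δ, hδ, hδw⟩ := hwR M
  have hle : Am d q p h ≤ Am d q p (((M / δ : ℝ) : ℂ) • fun x => (w x : ℂ)) := by
    refine Am_mono_ae (Eventually.of_forall fun x => enorm_le_iff_norm_le.2 ?_)
    have hM0 : 0 ≤ M := (norm_nonneg _).trans (hM x)
    by_cases hx : M < ‖x‖
    · rw [hM' x hx, norm_zero]
      positivity
    · have h1 := hδw x (not_lt.1 hx)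
      simp only [Pi.smul_apply, smul_eq_mul, norm_mul, Complex.norm_real, Real.norm_eq_abs,
        abs_of_pos (hw0 x), abs_of_nonneg (div_nonneg hM0 hδ.le)]
      calc ‖h x‖ ≤ M := hM x
        _ = M / δ * δ := by field_simp
        _ ≤ M / δ * w x := by gcongr
  rw [Am_smul] at hle
  exact ne_top_of_le_ne_top (ENNReal.mul_ne_top enorm_ne_top (hwA q p hq hp hpt)) hle

lemma BB.St {h : (Fin d → ℝ) → ℂ} (hh : BB h) (α : ℝ≥0∞) {ρ : ℝ} (hρ : 0 < ρ) :
    BB (St d α ρ h) := by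
  refine ⟨(locallyIntegrable_St hh.locallyIntegrable hρ).aestronglyMeasurable, ?_⟩
  obtain ⟨M, hM, hM'⟩ := hh.bdd
  have hr : (0 : ℝ) ≤ ρ ^ (-(d : ℝ) * (1 / α).toReal) := by positivity
  refine ⟨max (ρ ^ (-(d : ℝ) * (1 / α).toReal) * M) (ρ * M), fun x => ?_, fun x hx => ?_⟩
  · refine le_trans ?_ (le_max_left _ _)
    simp only [_root_.St, norm_smul, Real.norm_eq_abs, abs_of_nonneg hr]
    gcongr
    exact hM _
  · have h1 : M < ‖ρ⁻¹ • x‖ := by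
      rw [norm_smul, norm_inv, Real.norm_eq_abs, abs_of_pos hρ, lt_inv_mul_iff₀ hρ]
      exact (le_max_right _ _).trans_lt hx
    simp [_root_.St, hM' _ h1]

/-- A strict lower bound on a finite weighted sum survives replacing the terms `N k` by strictly
smaller `n k`; zero terms have nothing below them and are kept. -/
lemma exists_lt_sum {ι : Type*} (S : Finset ι) (b : ι → NNReal) (N : ι → ℝ≥0∞) {a : ℝ≥0∞}
    (ha : a < ∑ k ∈ S, b k * N k) :
    ∃ n : ι → ℝ≥0∞, (∀ k, n k = 0 ∨ n k < N k) ∧ a < ∑ k ∈ S, b k * n k := by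
  have h : ∀ k, ∃ u : ℕ → ℝ≥0∞, (∀ m, u m = 0 ∨ u m < N k) ∧ Tendsto u atTop (𝓝 (N k)) := by
    intro k
    rcases eq_or_ne (N k) 0 with h0 | h0
    · exact ⟨fun _ => 0, fun _ => Or.inl rfl, h0 ▸ tendsto_const_nhds⟩
    · obtain ⟨u, -, hu, hu'⟩ := exists_seq_strictMono_tendsto' (pos_iff_ne_zero.2 h0)
      exact ⟨u, fun m => Or.inr (hu m).2, hu'⟩
  choose u hu hu' using h
  have hlim : Tendsto (fun m => ∑ k ∈ S, b k * u k m) atTop (𝓝 (∑ k ∈ S, b k * N k)) :=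
    tendsto_finsetSum _ fun k _ => ENNReal.Tendsto.const_mul (hu' k) (Or.inr coe_ne_top)
  obtain ⟨m, hm⟩ := (hlim.eventually (lt_mem_nhds ha)).exists
  exact ⟨fun k => u k m, fun k => hu k m, hm⟩

/-- Norming functionals for amalgams: the converse of Hölder's inequality is applied once to the
counting measure on the cubes, and once on each of the finitely many cubes selected that way. -/
lemma exists_BB_test {q' p' : ℝ≥0∞} (hq : q⁻¹ + q'⁻¹ = 1) (hq1 : 1 < q)
    (hp : p⁻¹ + p'⁻¹ = 1) (hp1 : 1 < p) {g : (Fin d → ℝ) → ℂ}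
    (hg : LocallyIntegrable g volume) {a : ℝ≥0∞} (ha : a < Am d q p g) :
    ∃ h : (Fin d → ℝ) → ℂ, BB h ∧ Am d q' p' h ≤ 1 ∧ a < ‖∫ x, h x * g x‖ₑ := by
  wlog hgm : Measurable g generalizing g with H
  · have hga := hg.aestronglyMeasurable
    have hae := hga.ae_eq_mk
    have hmk : LocallyIntegrable (hga.mk g) volume := by
      rw [locallyIntegrable_iff] at hg ⊢
      exact fun K hK => (hg K hK).congr (ae_restrict_of_ae hae)
    obtain ⟨h, h1, h2, h3⟩ := H hmk (by rwa [← Am_congr_ae hae])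
      hga.stronglyMeasurable_mk.measurable
    refine ⟨h, h1, h2, ?_⟩
    have : ∫ x, h x * g x = ∫ x, h x * hga.mk g x :=
      integral_congr_ae (hae.mono fun x hx => by simp only [hx])
    rwa [this]
  obtain ⟨b, -, S, -, hS, -, hbS, hb, hab⟩ := exists_dual_test hp hp1 Measurable.of_discrete ha
  lift S to Finset (Fin d → ℤ) using Measure.count_apply_lt_top.1 hS
  have hbS' : ∀ k, k ∉ S → b k = 0 := hbS
  rw [lintegral_count, tsum_eq_sum (s := S) (fun k hk => by simp [hbS' k hk])] at hab
  obtain ⟨n, hn, han⟩ := exists_lt_sum _ _ _ hab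
  have hloc : ∀ k, ∃ (H : (Fin d → ℝ) → NNReal) (M : NNReal), Measurable H ∧ (∀ x, H x ≤ M) ∧
      eLpNorm (fun x => (H x : ℝ≥0∞)) q' (volume.restrict (cube d 1 k)) ≤ 1 ∧
      n k ≤ ∫⁻ x in cube d 1 k, H x * ‖g x‖ₑ := by
    intro k
    rcases hn k with h0 | h0
    · exact ⟨0, 0, measurable_zero, fun _ => le_rfl, by simp, by simp [h0]⟩
    · rw [← eLpNorm_enorm] at h0
      obtain ⟨H, M, -, h1, -, h2, -, h3, h4⟩ := exists_dual_test hq hq1 hgm.enorm h0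
      exact ⟨H, M, h1, h2, h3, h4.le⟩
  choose H M hHm hHM hH1 hHn using hloc
  -- `P` glues the local extremal functions with the weights `b`; the phase `ph` aligns with `g`
  let P : (Fin d → ℝ) → NNReal := fun x => b (cubeIndex d x) * H (cubeIndex d x) x
  have hPm : Measurable P := by
    have h1 : Measurable (fun z : (Fin d → ℤ) × (Fin d → ℝ) => b z.1 * H z.1 z.2) :=
      measurable_from_prod_countable_right fun k => (hHm k).const_mul (b k)
    exact h1.comp (measurable_cubeIndex.prodMk measurable_id)
  have hPk : ∀ k, ∀ x ∈ cube d 1 k, P x = b k * H k x := fun k x hx => by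
    simp only [P, mem_cube_one.1 hx]
  let ph : (Fin d → ℝ) → ℂ := fun x => (starRingEnd ℂ) (g x) / ‖g x‖
  have hphm : Measurable ph :=
    (Complex.continuous_conj.measurable.comp hgm).div (Complex.measurable_ofReal.comp hgm.norm)
  have hph1 : ∀ x, ‖ph x‖ ≤ 1 := fun x => by
    simp only [ph, norm_div, RCLike.norm_conj, Complex.norm_real, norm_norm]
    exact div_self_le_one _
  have hphg : ∀ x, ph x * g x = ‖g x‖ := fun x => by
    simp only [ph, div_mul_eq_mul_div, Complex.conj_mul']
    by_cases h0 : g x = 0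
    · simp [h0]
    · have : (‖g x‖ : ℂ) ≠ 0 := by simpa using h0
      field_simp
  have hle : ∀ x, ‖(P x : ℂ) * ph x‖ ≤ P x := fun x => by
    rw [norm_mul]
    have : ‖((P x : NNReal) : ℂ)‖ = P x := by simp
    rw [this]
    exact mul_le_of_le_one_right (P x).2 (hph1 x)
  -- the constant is a bound for `P` plus a bound for the norm on the finitely many cubes in `S`
  have hBB : BB (fun x => (P x : ℂ) * ph x) := by
    refine ⟨((Complex.measurable_ofReal.comp hPm.coe_nnreal_real).mul hphm).aestronglyMeasurable,
      (∑ k ∈ S, b k * M k : NNReal) + ∑ k ∈ S, (‖fun j => ((k j : ℤ) : ℝ)‖ + 1), fun x => ?_,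
      fun x hx => ?_⟩
    · refine (hle x).trans (le_add_of_le_of_nonneg (NNReal.coe_le_coe.2 ?_)
        (Finset.sum_nonneg fun _ _ => by positivity))
      by_cases hk : cubeIndex d x ∈ S
      · exact (mul_le_mul_right (hHM _ x) _).trans
          (Finset.single_le_sum (f := fun k => b k * M k) (fun _ _ => zero_le) hk)
      · simp [P, hbS' _ hk]
    · have hk : cubeIndex d x ∉ S := by
        intro hk
        refine hx.not_ge (le_add_of_nonneg_of_le (NNReal.coe_nonneg _) ?_)
        refine le_trans ?_ (Finset.single_le_sum
          (f := fun k : Fin d → ℤ => ‖fun j => ((k j : ℤ) : ℝ)‖ + 1)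
          (fun _ _ => by positivity) hk)
        refine (pi_norm_le_iff_of_nonneg (by positivity)).2 fun j => ?_
        have h1 : ‖x j - (⌊x j⌋ : ℝ)‖ ≤ 1 := by
          rw [Real.norm_eq_abs, abs_of_nonneg (sub_nonneg.2 (Int.floor_le _))]
          linarith [Int.lt_floor_add_one (x j)]
        have h2 := norm_le_pi_norm (fun j => ((cubeIndex d x j : ℤ) : ℝ)) j
        have h3 := norm_add_le (x j - (⌊x j⌋ : ℝ)) (⌊x j⌋ : ℝ)
        rw [sub_add_cancel] at h3
        simp only [cubeIndex] at h2 ⊢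
        linarith
      simp [P, hbS' _ hk]
  refine ⟨_, hBB, ?_, ?_⟩
  · refine le_trans (eLpNorm_mono_enorm fun k => ?_) hb
    simp only [enorm_eq_self]
    calc eLpNorm (fun x => (P x : ℂ) * ph x) q' (volume.restrict (cube d 1 k))
        ≤ eLpNorm (fun x => (b k : ℝ≥0∞) * H k x) q' (volume.restrict (cube d 1 k)) := by
          refine eLpNorm_mono_enorm_ae ?_
          filter_upwards [ae_restrict_mem (measurableSet_cube 1 k)] with x hx
          rw [enorm_eq_self, ← ENNReal.coe_mul, ← hPk k x hx, enorm_eq_nnnorm, ENNReal.coe_le_coe]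
          exact hle x
      _ = b k * eLpNorm (fun x => (H k x : ℝ≥0∞)) q' (volume.restrict (cube d 1 k)) :=
          eLpNorm_const_mul_ennreal coe_ne_top _
      _ ≤ b k := mul_le_of_le_one_right' (hH1 k)
  · have hint := hBB.integrable_mul hg
    have heq : ∀ x, (P x : ℂ) * ph x * g x = ((P x * ‖g x‖ : ℝ) : ℂ) := fun x => by
      rw [mul_assoc, hphg]
      push_cast
      rfl
    simp only [heq] at hint ⊢
    have hint' : Integrable (fun x => (P x * ‖g x‖ : ℝ)) volume := by
      simpa using hint.re
    have hnn : ∀ x, (0 : ℝ) ≤ P x * ‖g x‖ := fun x => by positivity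
    rw [integral_complex_ofReal, enorm_eq_nnnorm, Complex.nnnorm_real, ← enorm_eq_nnnorm,
      Real.enorm_of_nonneg (integral_nonneg hnn),
      ofReal_integral_eq_lintegral_ofReal hint' (Eventually.of_forall hnn),
      lintegral_eq_count_cubes, lintegral_count]
    refine han.trans_le (le_trans (Finset.sum_le_sum fun k _ => ?_) (ENNReal.sum_le_tsum S))
    calc (b k : ℝ≥0∞) * n k ≤ b k * ∫⁻ x in cube d 1 k, H k x * ‖g x‖ₑ := by
          gcongr
          exact hHn k
      _ = ∫⁻ x in cube d 1 k, b k * (H k x * ‖g x‖ₑ) :=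
          (lintegral_const_mul' _ _ coe_ne_top).symm
      _ = _ := by
          refine setLIntegral_congr_fun (measurableSet_cube 1 k) fun x hx => ?_
          rw [ENNReal.ofReal_mul (NNReal.coe_nonneg _), ofReal_norm, ENNReal.ofReal_coe_nnreal,
            hPk k x hx, ENNReal.coe_mul, mul_assoc]

end

/-! ### The space `𝓗` and the pairing -/

section

variable {d : ℕ} {q p α q' p' α' : ℝ≥0∞}

lemma locallyIntegrable_partial {c : ℕ → ℂ} {ρ : ℕ → ℝ} {g : ℕ → (Fin d → ℝ) → ℂ}
    (hρ : ∀ n, 0 < ρ n) (hg : ∀ n, LocallyIntegrable (g n) volume) (m : ℕ) :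
    LocallyIntegrable (∑ n ∈ Finset.range m, c n • St d α' (ρ n) (g n)) volume := by
  induction m with
  | zero => exact locallyIntegrable_zero
  | succ m ih =>
    rw [Finset.sum_range_succ]
    exact ih.add ((locallyIntegrable_St (hg m) (hρ m)).smul (c m))

/-- A function is dominated a.e. by the absolute series of any of its decompositions: along a
subsequence the partial sums converge a.e. on a given ball. -/
lemma IsHDecomp.enorm_le {f : (Fin d → ℝ) → ℂ} {c : ℕ → ℂ} {ρ : ℕ → ℝ}
    {g : ℕ → (Fin d → ℝ) → ℂ} (h : IsHDecomp d q' p' α' f c ρ g) :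
    ∀ᵐ x, ‖f x‖ₑ ≤ ∑' n, ‖c n‖ₑ * ‖St d α' (ρ n) (g n) x‖ₑ := by
  have key : ∀ R : ℕ, ∀ᵐ x ∂volume.restrict (Metric.closedBall (0 : Fin d → ℝ) R),
      ‖f x‖ₑ ≤ ∑' n, ‖c n‖ₑ * ‖St d α' (ρ n) (g n) x‖ₑ := by
    intro R
    have hK := isCompact_closedBall (0 : Fin d → ℝ) (R : ℝ)
    have hS := locallyIntegrable_partial (α' := α') (c := c) h.rho_pos h.loc_int
    have h1 : TendstoInMeasure (volume.restrict (Metric.closedBall (0 : Fin d → ℝ) R))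
        (fun m => ∑ n ∈ Finset.range m, c n • St d α' (ρ n) (g n)) atTop f := by
      refine tendstoInMeasure_of_tendsto_eLpNorm (p := 1) one_ne_zero
        (fun m => (hS m).aestronglyMeasurable.restrict) h.f_loc_int.aestronglyMeasurable.restrict ?_
      have h2 := ENNReal.tendsto_ofReal (h.tendsto _ hK)
      rw [ENNReal.ofReal_zero] at h2
      refine h2.congr fun m => ?_
      have hi : IntegrableOn ((∑ n ∈ Finset.range m, c n • St d α' (ρ n) (g n)) - f)
          (Metric.closedBall (0 : Fin d → ℝ) R) volume :=
        ((hS m).sub h.f_loc_int).integrableOn_isCompact hK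
      rw [eLpNorm_one_eq_lintegral_enorm]
      exact ofReal_integral_norm_eq_lintegral_enorm hi
    obtain ⟨ns, -, hns⟩ := h1.exists_seq_tendsto_ae
    filter_upwards [hns] with x hx
    refine le_of_tendsto hx.enorm (Eventually.of_forall fun i => ?_)
    rw [Finset.sum_apply]
    refine (enorm_sum_le _ _).trans ((Finset.sum_le_sum fun n _ => ?_).trans
      (ENNReal.sum_le_tsum _))
    rw [Pi.smul_apply, smul_eq_mul, enorm_mul]
  have := (ae_restrict_iUnion_iff (μ := volume)
    (fun R : ℕ => Metric.closedBall (0 : Fin d → ℝ) R) _).2 key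
  rwa [Metric.iUnion_closedBall_nat, Measure.restrict_univ] at this

/-- The relations between the exponents. The conjugacy of `α` and `α'` is recorded in real form, as
it enters through real powers of the dilation parameter; `1 / ∞` has real value `0`. -/
structure Expo (q p α q' p' α' : ℝ≥0∞) : Prop where
  q1 : 1 < q
  qα : q ≤ α
  αp : α ≤ p
  qq : q⁻¹ + q'⁻¹ = 1
  pp : p⁻¹ + p'⁻¹ = 1
  αα : (1 / α).toReal + (1 / α').toReal = 1

namespace Expo

lemma p1 (e : Expo q p α q' p' α') : 1 < p := e.q1.trans_le (e.qα.trans e.αp)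
lemma p0 (e : Expo q p α q' p' α') : p ≠ 0 := (zero_lt_one.trans e.p1).ne'
lemma q0' (e : Expo q p α q' p' α') : q' ≠ 0 := conj_ne_zero e.qq
lemma qt' (e : Expo q p α q' p' α') : q' ≠ ∞ := conj_ne_top e.qq e.q1
lemma p0' (e : Expo q p α q' p' α') : p' ≠ 0 := conj_ne_zero e.pp
lemma pt' (e : Expo q p α q' p' α') : p' ≠ ∞ := conj_ne_top e.pp e.p1
lemma p1' (e : Expo q p α q' p' α') : 1 ≤ p' := by
  rw [← ENNReal.inv_le_one, ← e.pp]
  exact le_add_self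

end Expo

/-- Hölder's inequality for one building block. -/
lemma lintegral_St_mul_le (e : Expo q p α q' p' α') {f g : (Fin d → ℝ) → ℂ} {ρ : ℝ} (hρ : 0 < ρ)
    (hf : AEStronglyMeasurable f volume) (hg : AEStronglyMeasurable g volume) :
    ∫⁻ x, ‖St d α' ρ f x‖ₑ * ‖g x‖ₑ ≤ Am d q' p' f * fofanaNorm d q p α g := by
  rw [lintegral_St_mul e.αα hρ]
  refine (lintegral_mul_le_Am e.qq e.q1 e.pp e.p1 hf (aestronglyMeasurable_Dil hg hρ)).trans ?_
  gcongr
  exact Am_Dil_le e.p0 α g hρ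

lemma IsHDecomp.lintegral_mul_le (e : Expo q p α q' p' α') {f g : (Fin d → ℝ) → ℂ} {c : ℕ → ℂ}
    {ρ : ℕ → ℝ} {b : ℕ → (Fin d → ℝ) → ℂ} (h : IsHDecomp d q' p' α' f c ρ b)
    (hg : LocallyIntegrable g volume) :
    ∫⁻ x, ‖f x‖ₑ * ‖g x‖ₑ ≤ (∑' n, ENNReal.ofReal ‖c n‖) * fofanaNorm d q p α g := by
  have hgm := hg.aestronglyMeasurable
  calc ∫⁻ x, ‖f x‖ₑ * ‖g x‖ₑ
      ≤ ∫⁻ x, ∑' n, ‖c n‖ₑ * (‖St d α' (ρ n) (b n) x‖ₑ * ‖g x‖ₑ) := by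
        refine lintegral_mono_ae (h.enorm_le.mono fun x hx => ?_)
        refine (mul_le_mul_left hx _).trans_eq ?_
        rw [← ENNReal.tsum_mul_right]
        simp only [mul_assoc]
    _ = ∑' n, ‖c n‖ₑ * ∫⁻ x, ‖St d α' (ρ n) (b n) x‖ₑ * ‖g x‖ₑ := by
        have hm : ∀ n, AEMeasurable
            (fun x => ‖c n‖ₑ * (‖St d α' (ρ n) (b n) x‖ₑ * ‖g x‖ₑ)) volume := fun n =>
          ((locallyIntegrable_St (h.loc_int n)
            (h.rho_pos n)).aestronglyMeasurable.enorm.mul hgm.enorm).const_mul _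
        rw [lintegral_tsum hm]
        simp only [lintegral_const_mul' _ _ enorm_ne_top]
    _ ≤ ∑' n, ‖c n‖ₑ * fofanaNorm d q p α g := by
        refine ENNReal.tsum_le_tsum fun n => ?_
        gcongr
        refine (lintegral_St_mul_le e (h.rho_pos n) (h.loc_int n).aestronglyMeasurable hgm).trans ?_
        refine mul_le_of_le_one_left' ?_
        rw [← amalgamNorm_one e.p0']
        exact h.norm_le n
    _ = _ := by rw [ENNReal.tsum_mul_right]; simp only [ofReal_norm]

/-- The pairing between `𝓗` and the Fofana space is dominated by the product of the norms. -/
lemma MemH.lintegral_mul_le (e : Expo q p α q' p' α') {f g : (Fin d → ℝ) → ℂ}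
    (hf : MemH d q' p' α' f) (hg : LocallyIntegrable g volume) (hgt : fofanaNorm d q p α g ≠ ∞) :
    ∫⁻ x, ‖f x‖ₑ * ‖g x‖ₑ ≤ HNorm d q' p' α' f * fofanaNorm d q p α g := by
  by_cases h0 : fofanaNorm d q p α g = 0
  · obtain ⟨c, ρ, b, h⟩ := hf
    have := h.lintegral_mul_le e hg
    rw [h0, mul_zero] at this ⊢
    exact this
  · rw [← ENNReal.div_le_iff h0 hgt]
    refine le_sInf ?_
    rintro _ ⟨c, ρ, b, h, rfl⟩
    rw [ENNReal.div_le_iff h0 hgt]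
    exact h.lintegral_mul_le e hg

lemma MemH.locallyIntegrable {f : (Fin d → ℝ) → ℂ} (hf : MemH d q' p' α' f) :
    LocallyIntegrable f volume := by
  obtain ⟨c, ρ, b, h⟩ := hf
  exact h.f_loc_int

lemma IsHDecomp.tsum_ne_top {f : (Fin d → ℝ) → ℂ} {c : ℕ → ℂ} {ρ : ℕ → ℝ}
    {g : ℕ → (Fin d → ℝ) → ℂ} (h : IsHDecomp d q' p' α' f c ρ g) :
    ∑' n, ENNReal.ofReal ‖c n‖ ≠ ∞ :=
  h.summable.tsum_ofReal_ne_top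

lemma IsHDecomp.HNorm_le {f : (Fin d → ℝ) → ℂ} {c : ℕ → ℂ} {ρ : ℕ → ℝ}
    {g : ℕ → (Fin d → ℝ) → ℂ} (h : IsHDecomp d q' p' α' f c ρ g) :
    HNorm d q' p' α' f ≤ ∑' n, ENNReal.ofReal ‖c n‖ :=
  sInf_le ⟨c, ρ, g, h, rfl⟩

lemma MemH.HNorm_ne_top {f : (Fin d → ℝ) → ℂ} (hf : MemH d q' p' α' f) :
    HNorm d q' p' α' f ≠ ∞ := by
  obtain ⟨c, ρ, b, h⟩ := hf
  exact ne_top_of_le_ne_top h.tsum_ne_top h.HNorm_le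

lemma MemH.integrable_mul (e : Expo q p α q' p' α') {f g : (Fin d → ℝ) → ℂ}
    (hf : MemH d q' p' α' f) (hg : LocallyIntegrable g volume) (hgt : fofanaNorm d q p α g ≠ ∞) :
    Integrable (fun x => f x * g x) volume := by
  refine ⟨hf.locallyIntegrable.aestronglyMeasurable.mul hg.aestronglyMeasurable, ?_⟩
  rw [hasFiniteIntegral_iff_enorm]
  simp only [enorm_mul]
  exact (hf.lintegral_mul_le e hg hgt).trans_lt
    (ENNReal.mul_lt_top hf.HNorm_ne_top.lt_top hgt.lt_top)

lemma MemH.enorm_integral_le (e : Expo q p α q' p' α') {f g : (Fin d → ℝ) → ℂ}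
    (hf : MemH d q' p' α' f) (hg : LocallyIntegrable g volume) (hgt : fofanaNorm d q p α g ≠ ∞) :
    ‖∫ x, f x * g x‖ₑ ≤ HNorm d q' p' α' f * fofanaNorm d q p α g := by
  refine (enorm_integral_le_lintegral_enorm _).trans ?_
  simp only [enorm_mul]
  exact hf.lintegral_mul_le e hg hgt

lemma St_smul (c : ℂ) (ρ : ℝ) (f : (Fin d → ℝ) → ℂ) : St d α ρ (c • f) = c • St d α ρ f := by
  funext x
  simp only [St, Pi.smul_apply]
  rw [smul_comm]

lemma St_one (f : (Fin d → ℝ) → ℂ) : St d α 1 f = f := by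
  funext x
  simp [St]

/-- A single dilated function is its own decomposition, with one nonzero coefficient. -/
lemma isHDecomp_St (hp0 : p' ≠ 0) {h : (Fin d → ℝ) → ℂ} (hh : LocallyIntegrable h volume) {t : ℝ}
    (ht : 0 < t) (hA : Am d q' p' h ≤ ENNReal.ofReal t) {ρ : ℝ} (hρ : 0 < ρ) :
    IsHDecomp d q' p' α' (St d α' ρ h) (Pi.single 0 (t : ℂ)) (fun _ => ρ)
      (fun _ => (t⁻¹ : ℂ) • h) where
  summable := by
    refine summable_of_ne_finset_zero (s := {0}) fun n hn => ?_
    rw [Pi.single_eq_of_ne (by simpa using hn), norm_zero]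
  rho_pos _ := hρ
  loc_int _ := hh.smul _
  norm_le _ := by
    rw [amalgamNorm_one hp0, Am_smul, enorm_inv (by simpa using ht.ne'), ← ofReal_norm,
      Complex.norm_real, Real.norm_of_nonneg ht.le]
    refine (mul_le_mul_right hA _).trans ?_
    exact (ENNReal.inv_mul_cancel (ENNReal.ofReal_pos.2 ht).ne' ENNReal.ofReal_ne_top).le
  f_loc_int := locallyIntegrable_St hh hρ
  tendsto K _ := by
    refine tendsto_const_nhds.congr' ?_
    filter_upwards [eventually_ge_atTop 1] with m hm
    have : ∑ n ∈ Finset.range m, (Pi.single 0 (t : ℂ) : ℕ → ℂ) n • St d α' ρ ((t⁻¹ : ℂ) • h) =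
        St d α' ρ h := by
      rw [Finset.sum_eq_single 0, Pi.single_eq_same, St_smul, smul_inv_smul₀]
      · simpa using ht.ne'
      · intro n _ hn
        rw [Pi.single_eq_of_ne hn, zero_smul]
      · intro hn
        exact absurd (Finset.mem_range.2 hm) hn
    rw [this]
    simp

lemma memH_St (hp0 : p' ≠ 0) {h : (Fin d → ℝ) → ℂ} (hh : LocallyIntegrable h volume)
    (hA : Am d q' p' h ≠ ∞) {ρ : ℝ} (hρ : 0 < ρ) : MemH d q' p' α' (St d α' ρ h) := by
  refine ⟨_, _, _, isHDecomp_St (t := (Am d q' p' h).toReal + 1) hp0 hh (by positivity) ?_ hρ⟩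
  rw [ENNReal.ofReal_add toReal_nonneg zero_le_one, ENNReal.ofReal_toReal hA]
  exact le_self_add

/-- Dilations map the amalgam `(L^{q'}, ℓ^{p'})` contractively into `𝓗`. -/
lemma HNorm_St_le (hp0 : p' ≠ 0) {h : (Fin d → ℝ) → ℂ} (hh : LocallyIntegrable h volume)
    {ρ : ℝ} (hρ : 0 < ρ) : HNorm d q' p' α' (St d α' ρ h) ≤ Am d q' p' h := by
  refine le_of_forall_gt fun t ht => ?_
  by_cases htt : t = ∞
  · rw [htt]
    exact (memH_St hp0 hh ht.ne_top hρ).HNorm_ne_top.lt_top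
  · obtain ⟨s, hs1, hs2⟩ := exists_between ht
    have hst := hs2.ne_top
    have hs0 : 0 < s.toReal := ENNReal.toReal_pos (zero_le.trans_lt hs1).ne' hst
    refine lt_of_le_of_lt ?_ hs2
    refine (isHDecomp_St (t := s.toReal) hp0 hh hs0 ?_ hρ).HNorm_le.trans ?_
    · rw [ENNReal.ofReal_toReal hst]; exact hs1.le
    · rw [tsum_eq_single 0 fun n hn => by rw [Pi.single_eq_of_ne hn]; simp]
      simp [abs_of_pos hs0, ENNReal.ofReal_toReal hst]

/-- Tails of decompositions are decompositions of the remainders. -/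
lemma IsHDecomp.tail {f : (Fin d → ℝ) → ℂ} {c : ℕ → ℂ} {ρ : ℕ → ℝ}
    {g : ℕ → (Fin d → ℝ) → ℂ} (h : IsHDecomp d q' p' α' f c ρ g) (N : ℕ) :
    IsHDecomp d q' p' α' (f - ∑ n ∈ Finset.range N, c n • St d α' (ρ n) (g n))
      (fun n => c (N + n)) (fun n => ρ (N + n)) (fun n => g (N + n)) where
  summable := by
    have := (summable_nat_add_iff N).2 h.summable
    simpa only [add_comm N] using this
  rho_pos _ := h.rho_pos _
  loc_int _ := h.loc_int _
  norm_le _ := h.norm_le _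
  f_loc_int := h.f_loc_int.sub (locallyIntegrable_partial h.rho_pos h.loc_int N)
  tendsto K hK := by
    refine ((h.tendsto K hK).comp (tendsto_add_atTop_nat N)).congr fun m => ?_
    simp only [Function.comp_apply, add_comm m N, Finset.sum_range_add, Pi.add_apply, Pi.sub_apply]
    congr 1
    funext x
    congr 1
    ring

/-- Truncating the coefficients of a decomposition decomposes the partial sums. -/
lemma IsHDecomp.memH_partial {f : (Fin d → ℝ) → ℂ} {c : ℕ → ℂ} {ρ : ℕ → ℝ}
    {g : ℕ → (Fin d → ℝ) → ℂ} (h : IsHDecomp d q' p' α' f c ρ g) (N : ℕ) :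
    MemH d q' p' α' (∑ n ∈ Finset.range N, c n • St d α' (ρ n) (g n)) := by
  refine ⟨fun n => if n < N then c n else 0, ρ, g, ?_, h.rho_pos, h.loc_int, h.norm_le,
    locallyIntegrable_partial h.rho_pos h.loc_int N, fun K _ => ?_⟩
  · refine summable_of_ne_finset_zero (s := Finset.range N) fun n hn => ?_
    rw [if_neg (by simpa using hn), norm_zero]
  · refine tendsto_const_nhds.congr' ?_
    filter_upwards [eventually_ge_atTop N] with m hm
    have : ∑ n ∈ Finset.range m, (if n < N then c n else 0) • St d α' (ρ n) (g n) =
        ∑ n ∈ Finset.range N, c n • St d α' (ρ n) (g n) := by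
      rw [← Finset.sum_subset (Finset.range_mono hm)
        (f := fun n => (if n < N then c n else 0) • St d α' (ρ n) (g n))]
      · exact Finset.sum_congr rfl fun n hn => by rw [if_pos (Finset.mem_range.1 hn)]
      · intro n _ hn
        rw [if_neg (by simpa using hn), zero_smul]
    rw [this]
    simp

/-- A bounded linear functional on `𝓗(q,p,α)`, with norm at most `C`. It is encoded as a map on all
functions `ℝ^d → ℂ`, with no condition on its values outside `𝓗(q,p,α)`. -/
structure HFun (d : ℕ) (q' p' α' : ℝ≥0∞) (T : ((Fin d → ℝ) → ℂ) → ℂ) (C : ℝ) : Prop where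
  nonneg : 0 ≤ C
  add : ∀ f₁ f₂ : (Fin d → ℝ) → ℂ, MemH d q' p' α' f₁ → MemH d q' p' α' f₂ →
    T (f₁ + f₂) = T f₁ + T f₂
  smul : ∀ (a : ℂ) (f : (Fin d → ℝ) → ℂ), MemH d q' p' α' f → T (a • f) = a * T f
  bound : ∀ f : (Fin d → ℝ) → ℂ, MemH d q' p' α' f → ‖T f‖ ≤ C * (HNorm d q' p' α' f).toReal

namespace HFun

variable {T : ((Fin d → ℝ) → ℂ) → ℂ} {C : ℝ}

lemma norm_le (hT : HFun d q' p' α' T C) (hp0 : p' ≠ 0) {h : (Fin d → ℝ) → ℂ}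
    (hh : LocallyIntegrable h volume) (hA : Am d q' p' h ≠ ∞) {ρ : ℝ} (hρ : 0 < ρ) :
    ‖T (_root_.St d α' ρ h)‖ ≤ C * (Am d q' p' h).toReal :=
  (hT.bound _ (memH_St hp0 hh hA hρ)).trans (mul_le_mul_of_nonneg_left
    (ENNReal.toReal_mono hA (HNorm_St_le hp0 hh hρ)) hT.nonneg)

lemma norm_le_one (hT : HFun d q' p' α' T C) (hp0 : p' ≠ 0) {h : (Fin d → ℝ) → ℂ}
    (hh : LocallyIntegrable h volume) (hA : Am d q' p' h ≠ ∞) :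
    ‖T h‖ ≤ C * (Am d q' p' h).toReal := by
  simpa only [St_one] using hT.norm_le hp0 hh hA one_pos

end HFun

lemma memH_of_Am (hp0 : p' ≠ 0) {h : (Fin d → ℝ) → ℂ} (hh : LocallyIntegrable h volume)
    (hA : Am d q' p' h ≠ ∞) : MemH d q' p' α' h := by
  simpa only [St_one] using memH_St (α' := α') hp0 hh hA one_pos

namespace HFun

variable {T : ((Fin d → ℝ) → ℂ) → ℂ} {C : ℝ}

/-- A bounded functional vanishing on bounded functions of bounded support vanishes
identically: those functions are dense, first by truncating each building block, then by cutting
the decomposition. -/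
lemma eq_zero_of_BB (hT : HFun d q' p' α' T C) (e : Expo q p α q' p' α')
    (h0 : ∀ h, BB h → T h = 0) {f : (Fin d → ℝ) → ℂ} (hf : MemH d q' p' α' f) : T f = 0 := by
  have hSt : ∀ (h : (Fin d → ℝ) → ℂ) (ρ : ℝ), LocallyIntegrable h volume → Am d q' p' h ≠ ∞ →
      0 < ρ → T (St d α' ρ h) = 0 := by
    intro h ρ hh hA hρ
    have hm := hh.aestronglyMeasurable
    -- truncate `h` at height and radius `R`; the remainders tend to `0` in the amalgam
    let A : ℕ → Set (Fin d → ℝ) := fun R => {x | ‖x‖ ≤ R ∧ ‖h x‖ ≤ R}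
    have hAm : ∀ R, NullMeasurableSet (A R) volume := fun R =>
      (measurableSet_le measurable_norm measurable_const).nullMeasurableSet.inter
        (nullMeasurableSet_le hm.norm.aemeasurable aemeasurable_const)
    have hBB : ∀ R, BB ((A R).indicator h) := fun R => by
      refine ⟨hm.indicator₀ (hAm R), R, fun x => ?_, fun x hx => ?_⟩
      · by_cases hx : x ∈ A R
        · rw [Set.indicator_of_mem hx]; exact hx.2
        · rw [Set.indicator_of_notMem hx, norm_zero]; positivity
      · exact Set.indicator_of_notMem (fun h' => hx.not_ge h'.1) _
    have hle : ∀ R, ∀ x, ‖(A R)ᶜ.indicator h x‖ₑ ≤ ‖h x‖ₑ := fun R x =>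
      enorm_indicator_le_enorm_self _ _
    have hcm : ∀ R, AEStronglyMeasurable ((A R)ᶜ.indicator h) volume := fun R =>
      hm.indicator₀ (hAm R).compl
    have hlim : Tendsto (fun R => Am d q' p' ((A R)ᶜ.indicator h)) atTop (𝓝 0) := by
      refine tendsto_Am_zero e.q0' e.qt' e.p0' e.pt' hcm hle hA fun x => ?_
      refine tendsto_const_nhds.congr' ?_
      obtain ⟨N, hN⟩ := exists_nat_ge (max ‖x‖ ‖h x‖)
      filter_upwards [eventually_ge_atTop N] with R hR
      have hR' : max ‖x‖ ‖h x‖ ≤ R := hN.trans (by exact_mod_cast hR)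
      refine (Set.indicator_of_notMem ?_ _).symm
      exact fun hx => hx ⟨(le_max_left _ _).trans hR', (le_max_right _ _).trans hR'⟩
    have hcl : ∀ R, LocallyIntegrable ((A R)ᶜ.indicator h) volume := fun R =>
      hh.mono (hcm R) (Eventually.of_forall fun x => norm_indicator_le_norm_self _ _)
    have hcA : ∀ R, Am d q' p' ((A R)ᶜ.indicator h) ≠ ∞ := fun R =>
      ne_top_of_le_ne_top hA (Am_mono_ae (Eventually.of_forall (hle R)))
    have hdec : ∀ R, ‖T (St d α' ρ h)‖ ≤ C * (Am d q' p' ((A R)ᶜ.indicator h)).toReal := by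
      intro R
      have hs : St d α' ρ h =
          St d α' ρ ((A R).indicator h) + St d α' ρ ((A R)ᶜ.indicator h) := by
        conv_lhs => rw [← Set.indicator_self_add_compl (A R) h]
        funext x
        simp only [_root_.St, Pi.add_apply, smul_add]
      rw [hs, hT.add _ _ (memH_St e.p0' (hBB R).locallyIntegrable
          ((hBB R).Am_ne_top e.q0' e.p1' e.pt') hρ) (memH_St e.p0' (hcl R) (hcA R) hρ),
        h0 _ ((hBB R).St α' hρ), zero_add]
      exact hT.norm_le e.p0' (hcl R) (hcA R) hρ
    have hlim' : Tendsto (fun R => C * (Am d q' p' ((A R)ᶜ.indicator h)).toReal) atTop (𝓝 0) := by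
      simpa using ((ENNReal.tendsto_toReal zero_ne_top).comp hlim).const_mul C
    exact norm_le_zero_iff.1 (ge_of_tendsto' hlim' hdec)
  obtain ⟨c, ρ, g, h⟩ := hf
  have hg : ∀ n, Am d q' p' (g n) ≠ ∞ := fun n => by
    rw [← amalgamNorm_one e.p0']
    exact ne_top_of_le_ne_top one_ne_top (h.norm_le n)
  have hpart : ∀ N, T (∑ n ∈ Finset.range N, c n • St d α' (ρ n) (g n)) = 0 := by
    intro N
    induction N with
    | zero =>
      exact h0 _ ⟨aestronglyMeasurable_const, 0, by simp, by simp⟩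
    | succ N ih =>
      have hcN : Am d q' p' (c N • g N) ≠ ∞ := by
        rw [Am_smul]
        exact ENNReal.mul_ne_top enorm_ne_top (hg N)
      rw [Finset.sum_range_succ, hT.add _ _ (h.memH_partial N), ih, zero_add, ← St_smul]
      · exact hSt _ _ ((h.loc_int N).smul _) hcN (h.rho_pos N)
      · rw [← St_smul]
        exact memH_St e.p0' ((h.loc_int N).smul _) hcN (h.rho_pos N)
  have hle : ∀ N, ‖T f‖ ≤ C * (∑' n, ENNReal.ofReal ‖c (n + N)‖).toReal := by
    intro N
    have hm : MemH d q' p' α' (f - ∑ n ∈ Finset.range N, c n • St d α' (ρ n) (g n)) :=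
      ⟨_, _, _, h.tail N⟩
    have h1 := hT.add _ _ hm (h.memH_partial N)
    rw [sub_add_cancel, hpart, add_zero] at h1
    rw [h1]
    refine (hT.bound _ hm).trans (mul_le_mul_of_nonneg_left ?_ hT.nonneg)
    have h2 := (h.tail N).HNorm_le
    have h3 := (h.tail N).tsum_ne_top
    simp only [add_comm N] at h2 h3
    exact ENNReal.toReal_mono h3 h2
  have hlim := (ENNReal.tendsto_toReal zero_ne_top).comp
    (ENNReal.tendsto_sum_nat_add _ h.tsum_ne_top)
  have hlim' := hlim.const_mul C
  simp only [ENNReal.toReal_zero, mul_zero] at hlim'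
  exact norm_le_zero_iff.1 (ge_of_tendsto' hlim' hle)

end HFun

end

/-! ### Representation of bounded functionals -/

section

variable {d : ℕ} {q p α q' p' α' : ℝ≥0∞} {T : ((Fin d → ℝ) → ℂ) → ℂ} {C : ℝ}

/-- A bounded functional takes equal values on a.e. equal functions, since a null function has
zero amalgam norm. -/
lemma HFun.eq_of_ae (hT : HFun d q' p' α' T C) (e : Expo q p α q' p' α')
    {f f' : (Fin d → ℝ) → ℂ} (hf : MemH d q' p' α' f) (hff : f' =ᵐ[volume] f) : T f' = T f := by
  have hz : f' - f =ᵐ[volume] 0 := by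
    filter_upwards [hff] with x hx
    simp [hx]
  have hA : Am d q' p' (f' - f) = 0 := by
    rw [Am_congr_ae hz]
    simpa using Am_smul (q := q') (p := p') (d := d) 0 0
  have hl : LocallyIntegrable (f' - f) volume :=
    (locallyIntegrable_zero (ε'' := ℂ)).congr hz.symm
  have h1 := hT.norm_le_one e.p0' hl (hA ▸ zero_ne_top)
  rw [hA, ENNReal.toReal_zero, mul_zero] at h1
  have h2 := hT.add _ _ (memH_of_Am e.p0' hl (hA ▸ zero_ne_top)) hf
  rwa [sub_add_cancel, norm_le_zero_iff.1 h1, zero_add] at h2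

lemma Am_ne_top_of_bdd {F W : (Fin d → ℝ) → ℂ} {M : ℝ} (hW : Am d q p W ≠ ∞)
    (h : ∀ x, ‖F x‖ ≤ M * ‖W x‖) : Am d q p F ≠ ∞ := by
  have hle : Am d q p F ≤ Am d q p ((M : ℂ) • W) := by
    refine Am_mono_ae (Eventually.of_forall fun x => enorm_le_iff_norm_le.2 ((h x).trans ?_))
    simp only [Pi.smul_apply, smul_eq_mul, norm_mul, Complex.norm_real]
    gcongr
    exact le_abs_self M
  rw [Am_smul] at hle
  exact ne_top_of_le_ne_top (ENNReal.mul_ne_top enorm_ne_top hW) hle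

lemma locallyIntegrable_of_bdd {F : (Fin d → ℝ) → ℂ} {M : ℝ}
    (hF : AEStronglyMeasurable F volume) (h : ∀ x, ‖F x‖ ≤ M) : LocallyIntegrable F volume := by
  rw [locallyIntegrable_iff]
  intro K hK
  exact Measure.integrableOn_of_bounded hK.measure_lt_top.ne hF (Eventually.of_forall h)

/-- If uniformly dominated functions tend to `0` pointwise, then so do the values of a bounded
functional on them. -/
lemma HFun.tendsto_zero (hT : HFun d q' p' α' T C) (e : Expo q p α q' p' α') {ι : Type*}
    {l : Filter ι} [l.IsCountablyGenerated] {F : ι → (Fin d → ℝ) → ℂ} {W : (Fin d → ℝ) → ℂ}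
    (hW : Am d q' p' W ≠ ∞) (hF : ∀ i, LocallyIntegrable (F i) volume)
    (hFW : ∀ i x, ‖F i x‖ ≤ ‖W x‖) (hlim : ∀ x, Tendsto (fun i => F i x) l (𝓝 0)) :
    Tendsto (fun i => T (F i)) l (𝓝 0) := by
  have hA : ∀ i, Am d q' p' (F i) ≠ ∞ := fun i =>
    ne_top_of_le_ne_top hW
      (Am_mono_ae (Eventually.of_forall fun x => enorm_le_iff_norm_le.2 (hFW i x)))
  have h1 := tendsto_Am_zero e.q0' e.qt' e.p0' e.pt' (fun i => (hF i).aestronglyMeasurable)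
    (fun i x => enorm_le_iff_norm_le.2 (hFW i x)) hW hlim
  have h2 := ((ENNReal.tendsto_toReal zero_ne_top).comp h1).const_mul C
  simp only [ENNReal.toReal_zero, mul_zero] at h2
  exact squeeze_zero_norm (fun i => hT.norm_le_one e.p0' (hF i) (hA i)) h2

section weight

variable {w : (Fin d → ℝ) → ℝ}

/-- The complex measure `A ↦ T(χ_A w)`. -/
lemma HFun.exists_measure (hT : HFun d q' p' α' T C) (e : Expo q p α q' p' α')
    (hwm : Measurable w) (hw0 : ∀ x, 0 < w x) (hw1 : ∀ x, w x ≤ 1)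
    (hwA : Am d q' p' (fun x => (w x : ℂ)) ≠ ∞) :
    ∃ ν : ComplexMeasure (Fin d → ℝ), ∀ A, MeasurableSet A →
      ν A = T (A.indicator fun x => (w x : ℂ)) := by
  set W : (Fin d → ℝ) → ℂ := fun x => (w x : ℂ)
  have hWm : Measurable W := Complex.measurable_ofReal.comp hwm
  have hle : ∀ A : Set (Fin d → ℝ), ∀ x, ‖A.indicator W x‖ ≤ ‖W x‖ := fun A x =>
    norm_indicator_le_norm_self _ _
  have hW1 : ∀ x, ‖W x‖ ≤ 1 := fun x => by simpa [W, abs_of_pos (hw0 x)] using hw1 x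
  have hl : ∀ A, MeasurableSet A → LocallyIntegrable (A.indicator W) volume := fun A hA =>
    locallyIntegrable_of_bdd (hWm.indicator hA).aestronglyMeasurable
      fun x => (hle A x).trans (hW1 x)
  have hm : ∀ A, MeasurableSet A → MemH d q' p' α' (A.indicator W) := fun A hA =>
    memH_of_Am e.p0' (hl A hA) (ne_top_of_le_ne_top hwA
      (Am_mono_ae (Eventually.of_forall fun x => enorm_le_iff_norm_le.2 (hle A x))))
  have hun : ∀ A B, MeasurableSet A → MeasurableSet B → Disjoint A B →
      T ((A ∪ B).indicator W) = T (A.indicator W) + T (B.indicator W) := by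
    intro A B hA hB hAB
    rw [← hT.add _ _ (hm A hA) (hm B hB), Set.indicator_union_of_disjoint hAB]
    rfl
  have hempty : T ((∅ : Set (Fin d → ℝ)).indicator W) = 0 := by
    simpa using hun ∅ ∅ .empty .empty (Set.disjoint_empty _)
  classical
  refine ⟨⟨fun A => if MeasurableSet A then T (A.indicator W) else 0, by
    rw [if_pos .empty, hempty], fun A hA => if_neg hA, ?_⟩, fun A hA => if_pos hA⟩
  intro f hf hd
  have hbi : ∀ s : Finset ℕ, MeasurableSet (⋃ i ∈ s, f i) := fun s =>
    s.measurableSet_biUnion fun i _ => hf i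
  have hfin : ∀ s : Finset ℕ, ∑ i ∈ s, T ((f i).indicator W) =
      T ((⋃ i ∈ s, f i).indicator W) := by
    intro s
    induction s using Finset.induction_on with
    | empty => simpa using hempty.symm
    | insert a s ha ih =>
      rw [Finset.sum_insert ha, ih, Finset.set_biUnion_insert, hun _ _ (hf a) (hbi s)]
      refine Set.disjoint_iUnion₂_right.2 fun i hi => hd ?_
      rintro rfl
      exact ha hi
  have hU := MeasurableSet.iUnion hf
  simp only [if_pos (hf _), if_pos hU, HasSum, SummationFilter.unconditional_filter, hfin]
  -- σ-additivity is continuity from above along the remainders of the finite unions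
  have hdiff : ∀ s : Finset ℕ, T ((⋃ i ∈ s, f i).indicator W) =
      T ((⋃ i, f i).indicator W) - T (((⋃ i, f i) \ ⋃ i ∈ s, f i).indicator W) := by
    intro s
    rw [eq_sub_iff_add_eq, ← hun _ _ (hbi s) (hU.diff (hbi s)) Set.disjoint_sdiff_right,
      Set.union_sdiff_cancel (Set.iUnion₂_subset fun i _ => Set.subset_iUnion f i)]
  simp only [hdiff]
  have hz : Tendsto (fun s : Finset ℕ => T (((⋃ i, f i) \ ⋃ i ∈ s, f i).indicator W)) atTop
      (𝓝 0) := by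
    refine hT.tendsto_zero e hwA (fun s => hl _ (hU.diff (hbi s))) (fun s => hle _) fun x => ?_
    refine tendsto_const_nhds.congr' ?_
    by_cases hx : x ∈ ⋃ i, f i
    · obtain ⟨i, hi⟩ := Set.mem_iUnion.1 hx
      filter_upwards [eventually_ge_atTop {i}] with s hs
      refine (Set.indicator_of_notMem (fun h' => h'.2 ?_) _).symm
      exact Set.mem_iUnion₂.2 ⟨i, hs (Finset.mem_singleton_self i), hi⟩
    · exact Eventually.of_forall fun s => (Set.indicator_of_notMem (fun h' => hx h'.1) _).symm
  simpa using tendsto_const_nhds.sub hz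

/-- The Radon–Nikodym density of `A ↦ T(χ_A w)`. -/
lemma HFun.exists_density (hT : HFun d q' p' α' T C) (e : Expo q p α q' p' α')
    (hwm : Measurable w) (hw0 : ∀ x, 0 < w x) (hw1 : ∀ x, w x ≤ 1)
    (hwA : Am d q' p' (fun x => (w x : ℂ)) ≠ ∞) :
    ∃ G : (Fin d → ℝ) → ℂ, Integrable G volume ∧ ∀ A, MeasurableSet A →
      T (A.indicator fun x => (w x : ℂ)) = ∫ x in A, G x := by
  obtain ⟨ν, hν⟩ := hT.exists_measure e hwm hw0 hw1 hwA
  have hν0 : ∀ A, MeasurableSet A → volume A = 0 → ν A = 0 := by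
    intro A hA h0
    have hz : MemH d q' p' α' (0 : (Fin d → ℝ) → ℂ) := by
      refine memH_of_Am e.p0' (locallyIntegrable_zero (ε'' := ℂ)) (Am_ne_top_of_bdd (M := 0) hwA ?_)
      simp
    rw [hν A hA, hT.eq_of_ae e hz (indicator_meas_zero h0)]
    simpa using hT.smul 0 0 hz
  have hre : ComplexMeasure.re ν ≪ᵥ (volume : Measure (Fin d → ℝ)).toENNRealVectorMeasure := by
    refine VectorMeasure.AbsolutelyContinuous.mk fun A hA h0 => ?_
    rw [Measure.toENNRealVectorMeasure_apply_measurable hA] at h0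
    change (ν A).re = 0
    rw [hν0 A hA h0, Complex.zero_re]
  have him : ComplexMeasure.im ν ≪ᵥ (volume : Measure (Fin d → ℝ)).toENNRealVectorMeasure := by
    refine VectorMeasure.AbsolutelyContinuous.mk fun A hA h0 => ?_
    rw [Measure.toENNRealVectorMeasure_apply_measurable hA] at h0
    change (ν A).im = 0
    rw [hν0 A hA h0, Complex.zero_im]
  set a := (ComplexMeasure.re ν).rnDeriv volume
  set b := (ComplexMeasure.im ν).rnDeriv volume
  have ha : Integrable a volume := SignedMeasure.integrable_rnDeriv _ _
  have hb : Integrable b volume := SignedMeasure.integrable_rnDeriv _ _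
  refine ⟨fun x => (a x : ℂ) + (b x : ℂ) * Complex.I, ha.ofReal.add (hb.ofReal.mul_const _),
    fun A hA => ?_⟩
  have h1 : ∫ x in A, a x = (ν A).re := by
    rw [← withDensityᵥ_apply ha hA, SignedMeasure.withDensityᵥ_rnDeriv_eq _ _ hre]
    rfl
  have h2 : ∫ x in A, b x = (ν A).im := by
    rw [← withDensityᵥ_apply hb hA, SignedMeasure.withDensityᵥ_rnDeriv_eq _ _ him]
    rfl
  have h3 : IntegrableOn (fun x => (a x : ℂ)) A volume := ha.ofReal.integrableOn
  have h4 : IntegrableOn (fun x => (b x : ℂ) * Complex.I) A volume :=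
    (hb.ofReal.mul_const _).integrableOn
  change _ = ∫ x in A, ((a x : ℂ) + (b x : ℂ) * Complex.I)
  rw [integral_add h3 h4, integral_mul_const, integral_complex_ofReal, integral_complex_ofReal, h1, h2, ← hν A hA,
    Complex.re_add_im]

/-- The density represents `T` on all functions `φ w` with `φ` bounded. -/
lemma HFun.density_mul (hT : HFun d q' p' α' T C) (e : Expo q p α q' p' α')
    (hwm : Measurable w) (hw0 : ∀ x, 0 < w x) (hw1 : ∀ x, w x ≤ 1)
    (hwA : Am d q' p' (fun x => (w x : ℂ)) ≠ ∞) {G : (Fin d → ℝ) → ℂ} (hG : Integrable G volume)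
    (hTG : ∀ A, MeasurableSet A → T (A.indicator fun x => (w x : ℂ)) = ∫ x in A, G x)
    {φ : (Fin d → ℝ) → ℂ} {M : ℝ} (hφ : AEStronglyMeasurable φ volume) (hM : ∀ x, ‖φ x‖ ≤ M) :
    T (fun x => φ x * w x) = ∫ x, φ x * G x := by
  have hWm : Measurable (fun x => (w x : ℂ)) := Complex.measurable_ofReal.comp hwm
  have hW1 : ∀ x, ‖(w x : ℂ)‖ ≤ 1 := fun x => by simpa [abs_of_pos (hw0 x)] using hw1 x
  have hM0 : 0 ≤ M := (norm_nonneg _).trans (hM 0)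
  have hl : ∀ {ψ : (Fin d → ℝ) → ℂ} {N : ℝ}, AEStronglyMeasurable ψ volume → (∀ x, ‖ψ x‖ ≤ N) →
      LocallyIntegrable (fun x => ψ x * w x) volume := fun {ψ N} hψ hN =>
    locallyIntegrable_of_bdd (M := N) (hψ.mul hWm.aestronglyMeasurable) fun x => by
      rw [norm_mul]
      exact (mul_le_of_le_one_right (norm_nonneg _) (hW1 x)).trans (hN x)
  have hmem : ∀ {ψ : (Fin d → ℝ) → ℂ} {N : ℝ}, AEStronglyMeasurable ψ volume →
      (∀ x, ‖ψ x‖ ≤ N) → MemH d q' p' α' (fun x => ψ x * w x) := fun {ψ N} hψ hN =>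
    memH_of_Am e.p0' (hl hψ hN) (Am_ne_top_of_bdd (M := N) hwA fun x => by
      rw [norm_mul]
      exact mul_le_mul_of_nonneg_right (hN x) (norm_nonneg _))
  have hint : ∀ {ψ : (Fin d → ℝ) → ℂ} {N : ℝ}, AEStronglyMeasurable ψ volume →
      (∀ x, ‖ψ x‖ ≤ N) → Integrable (fun x => ψ x * G x) volume := fun {ψ N} hψ hN =>
    hG.bdd_mul hψ (Eventually.of_forall hN)
  have hsimple : ∀ s : SimpleFunc (Fin d → ℝ) ℂ,
      T (fun x => s x * w x) = ∫ x, s x * G x := by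
    intro s
    induction s using SimpleFunc.induction with
    | const c hs =>
      rename_i A
      have h1 : (fun x => (SimpleFunc.piecewise A hs (SimpleFunc.const _ c)
          (SimpleFunc.const _ 0)) x * (w x : ℂ)) = c • fun x => A.indicator 1 x * (w x : ℂ) := by
        funext x
        by_cases hx : x ∈ A <;> simp [hx]
      have h2 : (fun x => A.indicator 1 x * (w x : ℂ)) = A.indicator fun x => (w x : ℂ) := by
        funext x
        by_cases hx : x ∈ A <;> simp [hx]
      have h3 : MemH d q' p' α' (fun x => A.indicator 1 x * (w x : ℂ)) :=
        hmem (N := 1) ((measurable_const (a := (1 : ℂ))).indicator hs).aestronglyMeasurable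
          fun x => by by_cases hx : x ∈ A <;> simp [hx]
      rw [h1, hT.smul _ _ h3, h2, hTG A hs, ← integral_indicator hs, ← integral_const_mul]
      refine integral_congr_ae (Eventually.of_forall fun x => ?_)
      by_cases hx : x ∈ A <;> simp [hx]
    | add _ hs ht =>
      rename_i s t _
      obtain ⟨N₁, hN₁⟩ := s.exists_forall_norm_le
      obtain ⟨N₂, hN₂⟩ := t.exists_forall_norm_le
      have hsm := s.stronglyMeasurable.aestronglyMeasurable (μ := volume)
      have htm := t.stronglyMeasurable.aestronglyMeasurable (μ := volume)
      have h1 := hT.add _ _ (hmem hsm hN₁) (hmem htm hN₂)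
      simp only [SimpleFunc.coe_add, Pi.add_apply, add_mul]
      rw [integral_add (hint hsm hN₁) (hint htm hN₂), ← hs, ← ht, ← h1]
      rfl
  wlog hφm : StronglyMeasurable φ generalizing φ with H
  · -- replace `φ` by a strongly measurable modification with the same bound everywhere
    let B : Set (Fin d → ℝ) := {x | ‖hφ.mk φ x‖ ≤ M}
    have hB : MeasurableSet B := measurableSet_le hφ.stronglyMeasurable_mk.norm.measurable
      measurable_const
    have hm' : StronglyMeasurable (B.indicator (hφ.mk φ)) := hφ.stronglyMeasurable_mk.indicator hB
    have hae : φ =ᵐ[volume] B.indicator (hφ.mk φ) := by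
      filter_upwards [hφ.ae_eq_mk] with x hx
      have hxB : x ∈ B := by
        change ‖hφ.mk φ x‖ ≤ M
        rw [← hx]
        exact hM x
      rw [Set.indicator_of_mem hxB, hx]
    have hM' : ∀ x, ‖B.indicator (hφ.mk φ) x‖ ≤ M := fun x => by
      by_cases hx : x ∈ B
      · rw [Set.indicator_of_mem hx]; exact hx
      · rw [Set.indicator_of_notMem hx, norm_zero]; exact hM0
    have h1 := H hm'.aestronglyMeasurable hM' hm'
    rw [hT.eq_of_ae e (hmem hm'.aestronglyMeasurable hM')
      (hae.mono fun x hx => by simp only [hx]), h1]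
    exact integral_congr_ae (hae.mono fun x hx => by simp only [hx])
  let s := hφm.approxBounded M
  have hsM : ∀ n x, ‖s n x‖ ≤ M := fun n x => hφm.norm_approxBounded_le hM0 n x
  have hslim : ∀ x, Tendsto (fun n => s n x) atTop (𝓝 (φ x)) := fun x =>
    hφm.tendsto_approxBounded_of_norm_le (hM x)
  have hsm := fun n => (s n).stronglyMeasurable.aestronglyMeasurable (μ := volume)
  have hdm : ∀ n, AEStronglyMeasurable (fun x => s n x - φ x) volume := fun n => (hsm n).sub hφ
  have hdM : ∀ n x, ‖s n x - φ x‖ ≤ M + M := fun n x =>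
    (norm_sub_le _ _).trans (add_le_add (hsM n x) (hM x))
  have h1 : Tendsto (fun n => T (fun x => (s n x - φ x) * w x)) atTop (𝓝 0) := by
    refine hT.tendsto_zero e (W := fun x => ((M + M : ℝ) : ℂ) * w x) ?_ (fun n => hl (hdm n) (hdM n))
      (fun n x => ?_) fun x => ?_
    · refine Am_ne_top_of_bdd (M := M + M) hwA fun x => ?_
      rw [norm_mul, Complex.norm_real, Real.norm_of_nonneg (add_nonneg hM0 hM0)]
    · rw [norm_mul, norm_mul, Complex.norm_real (M + M), Real.norm_of_nonneg (add_nonneg hM0 hM0)]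
      exact mul_le_mul_of_nonneg_right (hdM n x) (norm_nonneg _)
    · simpa using ((hslim x).sub_const (φ x)).mul_const (w x : ℂ)
  have h2 : Tendsto (fun n => T (fun x => s n x * w x)) atTop
      (𝓝 (T (fun x => φ x * w x))) := by
    have h3 : ∀ n, T (fun x => s n x * w x) =
        T (fun x => (s n x - φ x) * w x) + T (fun x => φ x * w x) := fun n => by
      rw [← hT.add _ _ (hmem (hdm n) (hdM n)) (hmem hφ hM)]
      congr 1
      funext x
      simp only [Pi.add_apply]
      ring
    simp only [h3]
    simpa using h1.add_const (T (fun x => φ x * w x))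
  have h4 : Tendsto (fun n => ∫ x, s n x * G x) atTop (𝓝 (∫ x, φ x * G x)) := by
    refine tendsto_integral_of_dominated_convergence (fun x => M * ‖G x‖)
      (fun n => (hsm n).mul hG.aestronglyMeasurable) (hG.norm.const_mul M)
      (fun n => Eventually.of_forall fun x => ?_) (Eventually.of_forall fun x => ?_)
    · rw [norm_mul]
      exact mul_le_mul_of_nonneg_right (hsM n x) (norm_nonneg _)
    · exact (hslim x).mul_const (G x)
  simp only [hsimple] at h2
  exact tendsto_nhds_unique h2 h4

end weight

/-- A bounded functional is given, on bounded functions with bounded support, by integration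
against a locally integrable function. -/
lemma HFun.exists_repr_BB (hT : HFun d q' p' α' T C) (e : Expo q p α q' p' α') :
    ∃ g : (Fin d → ℝ) → ℂ, LocallyIntegrable g volume ∧ ∀ h, BB h → T h = ∫ x, h x * g x := by
  obtain ⟨w, hwm, hw0, hw1, hwR, hwA⟩ := exists_weight d
  have hwA' := hwA q' p' e.q0' e.p1' e.pt'
  obtain ⟨G, hG, hTG⟩ := hT.exists_density e hwm hw0 hw1 hwA'
  have hWm : Measurable (fun x => (w x : ℂ)) := Complex.measurable_ofReal.comp hwm
  have hwne : ∀ x, (w x : ℂ) ≠ 0 := fun x => by simpa using (hw0 x).ne'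
  refine ⟨fun x => (w x : ℂ)⁻¹ * G x, ?_, fun h hh => ?_⟩
  · rw [locallyIntegrable_iff]
    intro K hK
    obtain ⟨R, hR⟩ := hK.isBounded.exists_norm_le
    obtain ⟨δ, hδ, hδw⟩ := hwR R
    refine Integrable.bdd_mul (c := δ⁻¹) hG.integrableOn hWm.inv.aestronglyMeasurable ?_
    filter_upwards [ae_restrict_mem hK.measurableSet] with x hx
    rw [norm_inv, Complex.norm_real, Real.norm_of_nonneg (hw0 x).le]
    exact inv_anti₀ hδ (hδw x (hR x hx))
  · obtain ⟨M, hM, hM'⟩ := hh.bdd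
    obtain ⟨δ, hδ, hδw⟩ := hwR M
    have hM0 : 0 ≤ M := (norm_nonneg _).trans (hM 0)
    have hφM : ∀ x, ‖h x * (w x : ℂ)⁻¹‖ ≤ M * δ⁻¹ := fun x => by
      by_cases hx : M < ‖x‖
      · rw [hM' x hx, zero_mul, norm_zero]
        positivity
      · rw [norm_mul, norm_inv, Complex.norm_real, Real.norm_of_nonneg (hw0 x).le]
        exact mul_le_mul (hM x) (inv_anti₀ hδ (hδw x (not_lt.1 hx)))
          (inv_nonneg.2 (hw0 x).le) hM0
    have h1 := hT.density_mul e hwm hw0 hw1 hwA' hG hTG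
      (hh.meas.mul hWm.inv.aestronglyMeasurable) hφM
    simp only [Pi.mul_apply, Pi.inv_apply, mul_assoc, inv_mul_cancel₀ (hwne _), mul_one] at h1
    exact h1

/-- If pairing with `g` is bounded by `C` on dilated test functions, the Fofana norm of `g` is at
most `C`. -/
lemma fofanaNorm_le_of_test (e : Expo q p α q' p' α') {g : (Fin d → ℝ) → ℂ}
    (hg : LocallyIntegrable g volume) {C : ℝ≥0∞}
    (hC : ∀ (h : (Fin d → ℝ) → ℂ) (ρ : ℝ), BB h → Am d q' p' h ≤ 1 → 0 < ρ →
      ‖∫ x, St d α' ρ h x * g x‖ₑ ≤ C) :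
    fofanaNorm d q p α g ≤ C := by
  rw [fofanaNorm_eq e.p0]
  refine iSup₂_le fun ρ hρ => le_of_forall_lt fun a ha => ?_
  obtain ⟨h, hh, hA, hah⟩ := exists_BB_test e.qq e.q1 e.pp e.p1 (locallyIntegrable_Dil hg hρ) ha
  rw [← integral_St_mul e.αα hρ] at hah
  exact hah.trans_le (hC h ρ hh hA hρ)

/-- Every bounded functional on `𝓗(q,p,α)` is integration against a Fofana function. -/
lemma HFun.exists_repr (hT : HFun d q' p' α' T C) (e : Expo q p α q' p' α') :
    ∃ g : (Fin d → ℝ) → ℂ, LocallyIntegrable g volume ∧ fofanaNorm d q p α g ≠ ∞ ∧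
      ∀ f, MemH d q' p' α' f → T f = ∫ x, f x * g x := by
  obtain ⟨g, hg, hTg⟩ := hT.exists_repr_BB e
  have hgt : fofanaNorm d q p α g ≠ ∞ := by
    refine ne_top_of_le_ne_top ENNReal.ofReal_ne_top (b := ENNReal.ofReal C)
      (fofanaNorm_le_of_test e hg fun h ρ hh hA hρ => ?_)
    rw [← hTg _ (hh.St α' hρ), ← ofReal_norm]
    refine ENNReal.ofReal_le_ofReal ((hT.norm_le e.p0' hh.locallyIntegrable
      (ne_top_of_le_ne_top one_ne_top hA) hρ).trans (mul_le_of_le_one_right hT.nonneg ?_))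
    simpa using ENNReal.toReal_mono one_ne_top hA
  refine ⟨g, hg, hgt, fun f hf => ?_⟩
  -- the difference between `T` and the pairing is bounded and vanishes on test functions
  have hE : HFun d q' p' α' (fun f => T f - ∫ x, f x * g x)
      (C + (fofanaNorm d q p α g).toReal) := by
    refine ⟨add_nonneg hT.nonneg toReal_nonneg, fun f₁ f₂ h₁ h₂ => ?_, fun a f hf => ?_,
      fun f hf => ?_⟩
    · simp only [hT.add _ _ h₁ h₂, Pi.add_apply, add_mul]
      rw [integral_add (h₁.integrable_mul e hg hgt) (h₂.integrable_mul e hg hgt)]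
      ring
    · simp only [hT.smul _ _ hf, Pi.smul_apply, smul_eq_mul, mul_assoc]
      rw [integral_const_mul]
      ring
    · refine (norm_sub_le _ _).trans ?_
      rw [add_mul]
      refine add_le_add (hT.bound f hf) ?_
      have h1 := ENNReal.toReal_mono (ENNReal.mul_ne_top hf.HNorm_ne_top hgt)
        (hf.enorm_integral_le e hg hgt)
      rwa [toReal_enorm, ENNReal.toReal_mul, mul_comm] at h1
  exact sub_eq_zero.1 (hE.eq_zero_of_BB e (fun h hh => sub_eq_zero.2 (hTg h hh)) hf)

end

/-- Main theorem: for `1 < q ≤ α ≤ p ≤ ∞`, the map `g ↦ T_g`, `⟨T_g,f⟩ = ∫ f g`, is an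
isometric isomorphism of the Fofana space `(L^q,ℓ^p)^α(ℝ^d)` onto the dual of `𝓗(q,p,α)`:
it is isometric (`‖T_g‖ = ‖g‖_{q,p,α}`) and every bounded linear functional on
`𝓗(q,p,α)` is `T_g` for a unique `g`. -/
theorem fofana_is_dual_of_H
    (d : ℕ) (hd : 1 ≤ d) (q p α q' p' α' : ℝ≥0∞)
    (hq : 1 < q) (hqα : q ≤ α) (hαp : α ≤ p)
    (hqq' : 1 / q + 1 / q' = 1) (hpp' : 1 / p + 1 / p' = 1) (hαα' : 1 / α + 1 / α' = 1) :
    -- isometry: the operator norm of `T_g` equals `‖g‖_{q,p,α}`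
    (∀ g : (Fin d → ℝ) → ℂ, LocallyIntegrable g volume → fofanaNorm d q p α g ≠ ∞ →
      (⨆ f : {f : (Fin d → ℝ) → ℂ // MemH d q' p' α' f ∧ HNorm d q' p' α' f ≤ 1},
          ENNReal.ofReal ‖∫ x, (f : (Fin d → ℝ) → ℂ) x * g x‖) =
        fofanaNorm d q p α g) ∧
    -- surjectivity: every bounded linear functional on `𝓗(q,p,α)` is some `T_g`,
    -- with `g` unique (up to a.e. equality)
    (∀ T : ((Fin d → ℝ) → ℂ) → ℂ,
      (∀ f₁ f₂ : (Fin d → ℝ) → ℂ, MemH d q' p' α' f₁ → MemH d q' p' α' f₂ →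
        T (f₁ + f₂) = T f₁ + T f₂) →
      (∀ (a : ℂ) (f : (Fin d → ℝ) → ℂ), MemH d q' p' α' f → T (a • f) = a * T f) →
      (∃ C : ℝ, ∀ f : (Fin d → ℝ) → ℂ, MemH d q' p' α' f →
        ‖T f‖ ≤ C * (HNorm d q' p' α' f).toReal) →
      ∃ g : (Fin d → ℝ) → ℂ, LocallyIntegrable g volume ∧ fofanaNorm d q p α g ≠ ∞ ∧
        (∀ f : (Fin d → ℝ) → ℂ, MemH d q' p' α' f → T f = ∫ x, f x * g x) ∧
        ∀ g' : (Fin d → ℝ) → ℂ, LocallyIntegrable g' volume → fofanaNorm d q p α g' ≠ ∞ →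
          (∀ f : (Fin d → ℝ) → ℂ, MemH d q' p' α' f → T f = ∫ x, f x * g' x) →
          g' =ᵐ[volume] g) := by
  have hE : Expo q p α q' p' α' := by
    simp only [one_div] at hqq' hpp' hαα'
    refine ⟨hq, hqα, hαp, hqq', hpp', ?_⟩
    have h1 : α⁻¹ ≠ ∞ := ne_top_of_le_ne_top one_ne_top (hαα' ▸ le_self_add)
    have h2 : α'⁻¹ ≠ ∞ := ne_top_of_le_ne_top one_ne_top (hαα' ▸ le_add_self)
    rw [one_div, one_div, ← ENNReal.toReal_add h1 h2, hαα', ENNReal.toReal_one]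
  refine ⟨fun g hg hgt => le_antisymm (iSup_le fun f => ?_) ?_, fun T hadd hsmul hbound => ?_⟩
  · rw [ofReal_norm]
    exact (f.2.1.enorm_integral_le hE hg hgt).trans (mul_le_of_le_one_left' f.2.2)
  · refine fofanaNorm_le_of_test hE hg fun h ρ hh hA hρ => ?_
    rw [← ofReal_norm]
    exact le_iSup (fun f : {f : (Fin d → ℝ) → ℂ // MemH d q' p' α' f ∧ HNorm d q' p' α' f ≤ 1} =>
      ENNReal.ofReal ‖∫ x, (f : (Fin d → ℝ) → ℂ) x * g x‖)
      ⟨St d α' ρ h, memH_St hE.p0' hh.locallyIntegrable (ne_top_of_le_ne_top one_ne_top hA) hρ,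
        (HNorm_St_le hE.p0' hh.locallyIntegrable hρ).trans hA⟩
  · obtain ⟨C, hC⟩ := hbound
    -- a negative constant `C` is allowed in the boundedness hypothesis
    have hT : HFun d q' p' α' T (max C 0) := ⟨le_max_right _ _, hadd, hsmul, fun f hf =>
      (hC f hf).trans (mul_le_mul_of_nonneg_right (le_max_left _ _) toReal_nonneg)⟩
    obtain ⟨g, hg, hgt, hTg⟩ := hT.exists_repr hE
    refine ⟨g, hg, hgt, hTg, fun g' hg' hgt' hTg' => ?_⟩
    have h0 : g' - g =ᵐ[volume] 0 := by
      refine ae_eq_zero_of_forall_setIntegral_isCompact_eq_zero' (hg'.sub hg) fun K hK => ?_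
      have hBB : BB (K.indicator (1 : (Fin d → ℝ) → ℂ)) := by
        obtain ⟨R, hR⟩ := hK.isBounded.exists_norm_le
        refine ⟨((measurable_const (a := (1 : ℂ))).indicator
          hK.measurableSet).aestronglyMeasurable, max R 1, fun x => ?_, fun x hx => ?_⟩
        · by_cases hx : x ∈ K <;> simp [hx]
        · exact Set.indicator_of_notMem
            (fun h' => ((le_max_left R 1).trans_lt hx).not_ge (hR x h')) _
      have hK' : ∀ u : (Fin d → ℝ) → ℂ,
          ∫ x, K.indicator (1 : (Fin d → ℝ) → ℂ) x * u x = ∫ x in K, u x := fun u => by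
        rw [← integral_indicator hK.measurableSet]
        refine integral_congr_ae (Eventually.of_forall fun x => ?_)
        by_cases hx : x ∈ K <;> simp [hx]
      have hm : MemH d q' p' α' (K.indicator (1 : (Fin d → ℝ) → ℂ)) :=
        memH_of_Am hE.p0' hBB.locallyIntegrable (hBB.Am_ne_top hE.q0' hE.p1' hE.pt')
      have h1 := (hTg' _ hm).symm.trans (hTg _ hm)
      rw [hK', hK'] at h1
      change ∫ x in K, (g' x - g x) = 0
      rw [integral_sub (hg'.integrableOn_isCompact hK) (hg.integrableOn_isCompact hK), h1,
        sub_self]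
    filter_upwards [h0] with x hx
    exact sub_eq_zero.1 hx
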